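/- arXiv:0705.1128 — 2 statements merged into one kernel-verified Lean document; each statement's English description precedes it below -/
import Mathlib

section
/- Let n ≥ 3 and R > 0, and let U be a bounded harmonic function on {x ∈ ℝⁿ : ‖x‖ > R}. Then there exist real constants a, b, and C such that |U(x) − a − b·‖x‖^{2-n}| ≤ C·‖x‖^{1-n} for all x with ‖x‖ ≥ 2R. -/
open Filter MeasureTheory

/-- A function is harmonic on an open subset of `ℝⁿ` if it is smooth there and its
Euclidean Laplacian (the sum of its pure second partial derivatives) vanishes
identically. -/
def HarmonicOnSet {n : ℕ} (f : EuclideanSpace ℝ (Fin n) → ℝ)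
    (Ω : Set (EuclideanSpace ℝ (Fin n))) : Prop :=
  ContDiffOn ℝ (⊤ : ℕ∞) f Ω ∧
    ∀ x ∈ Ω, ∑ i : Fin n,
      fderiv ℝ (fun y => fderiv ℝ f y (EuclideanSpace.single i (1:ℝ))) x
        (EuclideanSpace.single i (1:ℝ)) = 0

/-!
Cut `U` off near the inner boundary to get a bounded `C²` function `v` on the whole space which
agrees with `U` far out, so that `Δ v` has compact support. Make the Newton kernel `‖y‖ ^ (2 - n)`
of class `C²` by replacing it inside a ball by a Taylor polynomial in `‖y‖²`; its Laplacian is then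
a multiple of the parabolic profile of that ball. Green's identity for two such kernels, with radii
`r < T` and centre `x`, expresses the difference between the averages of `v` over the two balls
through `Δ v`. As `r → 0` the small average tends to `v x`. As `T → ∞` the large averages around
different centres merge, because `v` is bounded, and the contribution of the large kernel decays
like `T ^ (2 - n)`. So off the support of `Δ v` the function `v` is a constant plus a multiple of
the Newton potential of `Δ v`, in which `‖y - x‖ ^ (2 - n)` is `‖x‖ ^ (2 - n)` up to
`O(‖x‖ ^ (1 - n))`, uniformly for `y` in the support.
-/

open InnerProductSpace Laplacian Metric Module Topology

section TruncatedPower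

lemma hasDerivAt_ite_le {F : Type*} [NormedAddCommGroup F] [NormedSpace ℝ F]
    {f g f' g' : ℝ → F} {c : ℝ}
    (hf : ∀ s ≤ c, HasDerivAt f (f' s) s) (hg : ∀ s, c ≤ s → HasDerivAt g (g' s) s)
    (h : f c = g c) (h' : f' c = g' c) (s : ℝ) :
    HasDerivAt (fun s => if s ≤ c then f s else g s) (if s ≤ c then f' s else g' s) s := by
  rcases lt_trichotomy s c with hs | rfl | hs
  · rw [if_pos hs.le]
    refine (hf s hs.le).congr_of_eventuallyEq ?_
    filter_upwards [Iio_mem_nhds hs] with t ht using if_pos (Set.mem_Iio.1 ht).le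
  · rw [if_pos le_rfl, ← hasDerivWithinAt_univ, ← Set.Iic_union_Ici (a := s)]
    refine HasDerivWithinAt.union ((hf s le_rfl).hasDerivWithinAt.congr
      (fun t ht => if_pos ht) (if_pos le_rfl)) ?_
    rw [h']
    refine (hg s le_rfl).hasDerivWithinAt.congr (fun t (ht : s ≤ t) => ?_) (by simp [h])
    rcases ht.eq_or_lt with rfl | hst
    · rw [if_pos le_rfl, h]
    · exact if_neg hst.not_ge
  · rw [if_neg hs.not_ge]
    refine (hg s hs.le).congr_of_eventuallyEq ?_
    filter_upwards [Ioi_mem_nhds hs] with t ht using if_neg (Set.mem_Ioi.1 ht).not_ge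

lemma contDiff_two_of_hasDerivAt {F : Type*} [NormedAddCommGroup F] [NormedSpace ℝ F]
    {f f' f'' : ℝ → F} (hf : ∀ s, HasDerivAt f (f' s) s) (hf' : ∀ s, HasDerivAt f' (f'' s) s)
    (hf'' : Continuous f'') : ContDiff ℝ 2 f := by
  rw [show (2 : WithTop ℕ∞) = 1 + 1 from (one_add_one_eq_two).symm, contDiff_succ_iff_deriv,
    funext fun s => (hf s).deriv, contDiff_one_iff_deriv, funext fun s => (hf' s).deriv]
  exact ⟨fun s => (hf s).differentiableAt, by simp, fun s => (hf' s).differentiableAt, hf''⟩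

variable {p c s : ℝ}

/-- The power `s ^ p`, replaced for `s ≤ c` by its second-order Taylor polynomial at `c`, so that
for `0 < c` the result is of class `C²` on the whole line. -/
noncomputable def truncatedRpow (p c s : ℝ) : ℝ :=
  if s ≤ c then c ^ p + p * c ^ (p - 1) * (s - c) + p * (p - 1) / 2 * c ^ (p - 2) * (s - c) ^ 2
  else s ^ p

/-- The derivative of `truncatedRpow p c`, for `0 < c`. -/
noncomputable def truncatedRpowDeriv (p c s : ℝ) : ℝ :=
  if s ≤ c then p * c ^ (p - 1) + p * (p - 1) * c ^ (p - 2) * (s - c) else p * s ^ (p - 1)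

/-- The second derivative of `truncatedRpow p c`, for `0 < c`. -/
noncomputable def truncatedRpowDeriv₂ (p c s : ℝ) : ℝ :=
  if s ≤ c then p * (p - 1) * c ^ (p - 2) else p * (p - 1) * s ^ (p - 2)

lemma truncatedRpow_of_le (h : c ≤ s) : truncatedRpow p c s = s ^ p := by
  rcases h.eq_or_lt with rfl | h
  · simp [truncatedRpow]
  · exact if_neg h.not_ge

lemma hasDerivAt_truncatedRpow (hc : 0 < c) (s : ℝ) :
    HasDerivAt (truncatedRpow p c) (truncatedRpowDeriv p c s) s := by
  have taylor (s : ℝ) : HasDerivAt (fun s =>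
      c ^ p + p * c ^ (p - 1) * (s - c) + p * (p - 1) / 2 * c ^ (p - 2) * (s - c) ^ 2)
      (p * c ^ (p - 1) + p * (p - 1) * c ^ (p - 2) * (s - c)) s := by
    have hsub : HasDerivAt (fun s => s - c) 1 s := (hasDerivAt_id s).sub_const c
    refine (((hsub.const_mul (p * c ^ (p - 1))).const_add (c ^ p)).add
      ((hsub.pow 2).const_mul (p * (p - 1) / 2 * c ^ (p - 2)))).congr_deriv ?_
    push_cast
    ring
  exact hasDerivAt_ite_le (fun s _ => taylor s)
    (fun s hs => Real.hasDerivAt_rpow_const (Or.inl (hc.trans_le hs).ne')) (by simp) (by simp) s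

lemma hasDerivAt_truncatedRpowDeriv (hc : 0 < c) (s : ℝ) :
    HasDerivAt (truncatedRpowDeriv p c) (truncatedRpowDeriv₂ p c s) s := by
  have taylor (s : ℝ) : HasDerivAt (fun s => p * c ^ (p - 1) + p * (p - 1) * c ^ (p - 2) * (s - c))
      (p * (p - 1) * c ^ (p - 2)) s := by
    simpa using (((hasDerivAt_id s).sub_const c).const_mul
      (p * (p - 1) * c ^ (p - 2))).const_add (p * c ^ (p - 1))
  have power (s : ℝ) (hs : c ≤ s) :
      HasDerivAt (fun s => p * s ^ (p - 1)) (p * (p - 1) * s ^ (p - 2)) s := by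
    refine ((Real.hasDerivAt_rpow_const (p := p - 1)
      (Or.inl (hc.trans_le hs).ne')).const_mul p).congr_deriv ?_
    rw [sub_sub, one_add_one_eq_two, mul_assoc]
  exact hasDerivAt_ite_le (fun s _ => taylor s) power (by simp) rfl s

lemma contDiff_truncatedRpow (hc : 0 < c) : ContDiff ℝ 2 (truncatedRpow p c) := by
  refine contDiff_two_of_hasDerivAt (hasDerivAt_truncatedRpow hc)
    (hasDerivAt_truncatedRpowDeriv hc) (continuous_if_le continuous_id continuous_const
      continuousOn_const (fun s hs => ?_) (by rintro s rfl; rfl))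
  exact (continuousAt_const.mul (Real.continuousAt_rpow_const s (p - 2)
    (Or.inl (hc.trans_le hs).ne'))).continuousWithinAt

/-- The radial Laplacian of `truncatedRpow p c` in dimension `2 * (1 - p)`, in which `s ^ p` is
harmonic as a function of the squared norm `s`. -/
lemma four_mul_truncatedRpowDeriv₂_add (hc : 0 < c) (s : ℝ) :
    4 * s * truncatedRpowDeriv₂ p c s + 4 * (1 - p) * truncatedRpowDeriv p c s =
      4 * p * (1 - p) * (2 - p) * c ^ (p - 2) * max (c - s) 0 := by
  have rpow_pred {t : ℝ} (ht : 0 < t) : t ^ (p - 1) = t * t ^ (p - 2) := by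
    rw [mul_comm, ← Real.rpow_add_one ht.ne']
    ring_nf
  rcases le_or_gt s c with hs | hs
  · rw [truncatedRpowDeriv₂, truncatedRpowDeriv, if_pos hs, if_pos hs, rpow_pred hc,
      max_eq_left (sub_nonneg.2 hs)]
    ring
  · rw [truncatedRpowDeriv₂, truncatedRpowDeriv, if_neg hs.not_ge, if_neg hs.not_ge,
      rpow_pred (hc.trans hs), max_eq_right (sub_nonpos.2 hs.le)]
    ring

lemma abs_truncatedRpow_le (hp : p ≤ 0) (hc : 0 < c) (hs : 0 ≤ s) :
    |truncatedRpow p c s| ≤ (1 + |p| + |p * (p - 1) / 2|) * c ^ p := by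
  have hcp : 0 < c ^ p := Real.rpow_pos_of_pos hc p
  rcases le_or_gt s c with hsc | hsc
  · have hratio : |(s - c) / c| ≤ 1 := by
      rw [abs_div, abs_of_pos hc, div_le_one hc, abs_le]
      exact ⟨by linarith, by linarith⟩
    calc |truncatedRpow p c s|
        = |1 + p * ((s - c) / c) + p * (p - 1) / 2 * ((s - c) / c) ^ 2| * c ^ p := by
          rw [truncatedRpow, if_pos hsc, Real.rpow_sub hc, Real.rpow_sub hc, Real.rpow_one,
            Real.rpow_two, ← abs_of_pos hcp, ← abs_mul, abs_of_pos hcp]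
          congr 1
          field_simp
      _ ≤ (1 + |p| + |p * (p - 1) / 2|) * c ^ p := by
          gcongr
          refine (abs_add_three _ _ _).trans ?_
          rw [abs_one, abs_mul, abs_mul, abs_pow]
          gcongr
          · exact mul_le_of_le_one_right (abs_nonneg _) hratio
          · exact mul_le_of_le_one_right (abs_nonneg _) (pow_le_one₀ (abs_nonneg _) hratio)
  · rw [truncatedRpow_of_le hsc.le, abs_of_nonneg (Real.rpow_nonneg hs p)]
    exact (Real.rpow_le_rpow_of_nonpos hc hsc.le hp).trans
      (le_mul_of_one_le_left hcp.le (by linarith [abs_nonneg p, abs_nonneg (p * (p - 1) / 2)]))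

end TruncatedPower

section WeightedAverage

variable {E F : Type*} [NormedAddCommGroup E] [MeasurableSpace E] [BorelSpace E] {μ : Measure E}
  [NormedAddCommGroup F] [NormedSpace ℝ F] {φ : E → ℝ} {v : E → F} {M : ℝ}

lemma integrable_smul_of_hasCompactSupport [IsFiniteMeasureOnCompacts μ] (hφ : Continuous φ)
    (hφc : HasCompactSupport φ) (hv : Continuous v) : Integrable (fun y => φ y • v y) μ :=
  (hφ.smul hv).integrable_of_hasCompactSupport hφc.smul_right

variable [NormedSpace ℝ E]

lemma norm_integral_smul_comp_add_smul_sub_le [μ.IsAddHaarMeasure] (hφ : Continuous φ)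
    (hφc : HasCompactSupport φ) (hv : Continuous v) (hM : ∀ x, ‖v x‖ ≤ M) {T : ℝ} (hT : T ≠ 0)
    (x x₀ : E) :
    ‖∫ z, φ z • v (x + T • z) ∂μ - ∫ z, φ z • v (x₀ + T • z) ∂μ‖ ≤
      (∫ z, ‖φ (z - T⁻¹ • (x - x₀)) - φ z‖ ∂μ) * M := by
  have translate : ∫ z, φ z • v (x + T • z) ∂μ =
      ∫ z, φ (z - T⁻¹ • (x - x₀)) • v (x₀ + T • z) ∂μ := by
    rw [← integral_sub_right_eq_self (μ := μ) _ (T⁻¹ • (x - x₀))]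
    refine integral_congr_ae (.of_forall fun z => ?_)
    simp only [smul_sub, smul_inv_smul₀ hT]
    congr 2
    abel
  have hφ' : Continuous fun z => φ (z - T⁻¹ • (x - x₀)) := by fun_prop
  have hφc' : HasCompactSupport fun z => φ (z - T⁻¹ • (x - x₀)) :=
    hφc.comp_homeomorph (Homeomorph.subRight _)
  rw [translate, ← integral_sub
    (integrable_smul_of_hasCompactSupport hφ' hφc' (by fun_prop))
    (integrable_smul_of_hasCompactSupport hφ hφc (by fun_prop)), ← integral_mul_const]
  refine norm_integral_le_of_norm_le
    (((hφ'.sub hφ).integrable_of_hasCompactSupport (hφc'.sub hφc)).norm.mul_const M)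
    (.of_forall fun z => ?_)
  rw [← sub_smul, norm_smul]
  gcongr
  exact hM _

variable [FiniteDimensional ℝ E]

lemma integral_inv_pow_mul_comp_inv_smul_sub_smul [μ.IsAddHaarMeasure] {r : ℝ} (hr : 0 < r)
    (φ : E → ℝ) (v : E → F) (x : E) :
    ∫ y, ((r ^ finrank ℝ E)⁻¹ * φ (r⁻¹ • (y - x))) • v y ∂μ = ∫ z, φ z • v (x + r • z) ∂μ := by
  calc ∫ y, ((r ^ finrank ℝ E)⁻¹ * φ (r⁻¹ • (y - x))) • v y ∂μ
      = (r ^ finrank ℝ E)⁻¹ • ∫ y, φ (r⁻¹ • (y - x)) • v (x + r • r⁻¹ • (y - x)) ∂μ := by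
        simp only [mul_smul, smul_inv_smul₀ hr.ne', add_sub_cancel, integral_smul]
    _ = (r ^ finrank ℝ E)⁻¹ • ∫ y, φ (r⁻¹ • y) • v (x + r • r⁻¹ • y) ∂μ := by
        rw [integral_sub_right_eq_self (fun y => φ (r⁻¹ • y) • v (x + r • r⁻¹ • y))]
    _ = ∫ z, φ z • v (x + r • z) ∂μ := by
        rw [Measure.integral_comp_inv_smul_of_nonneg _ (fun z => φ z • v (x + r • z)) hr.le,
          inv_smul_smul₀ (by positivity)]

lemma tendsto_integral_smul_comp_add_smul_zero [CompleteSpace F] (hφ : Integrable φ μ)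
    (hv : Continuous v) (hM : ∀ x, ‖v x‖ ≤ M) (x : E) :
    Tendsto (fun r : ℝ => ∫ z, φ z • v (x + r • z) ∂μ) (𝓝 0) (𝓝 ((∫ z, φ z ∂μ) • v x)) := by
  rw [← integral_smul_const]
  refine tendsto_integral_filter_of_dominated_convergence (fun z => ‖φ z‖ * M)
    (.of_forall fun r => hφ.aestronglyMeasurable.smul
      (hv.comp (by fun_prop)).aestronglyMeasurable)
    (.of_forall fun r => .of_forall fun z => ?_) (hφ.norm.mul_const M) (.of_forall fun z => ?_)
  · rw [norm_smul]
    gcongr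
    exact hM _
  · have hcont : Continuous fun r : ℝ => φ z • v (x + r • z) := by fun_prop
    simpa using hcont.tendsto 0

open scoped Pointwise in
lemma tendsto_integral_norm_comp_sub_sub [IsFiniteMeasureOnCompacts μ] (hφ : Continuous φ)
    (hφc : HasCompactSupport φ) :
    Tendsto (fun h => ∫ z, ‖φ (z - h) - φ z‖ ∂μ) (𝓝 0) (𝓝 0) := by
  let K := closedBall (0 : E) 1 + tsupport φ
  have hK : IsCompact K := (isCompact_closedBall 0 1).add hφc
  have hcont : ContinuousOn (fun h => ∫ z, ‖φ (z - h) - φ z‖ ∂μ) (closedBall 0 1) := by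
    refine continuousOn_integral_of_compact_support hK (by fun_prop) fun h z hh hz => ?_
    have hz₁ : z - h ∉ tsupport φ := fun hmem => hz ⟨h, hh, z - h, hmem, by simp⟩
    have hz₂ : z ∉ tsupport φ := fun hmem => hz ⟨0, by simp, z, hmem, by simp⟩
    rw [image_eq_zero_of_notMem_tsupport hz₁, image_eq_zero_of_notMem_tsupport hz₂, sub_zero,
      norm_zero]
  simpa using (hcont.continuousAt (closedBall_mem_nhds 0 one_pos)).tendsto

lemma tendsto_integral_smul_comp_add_smul_sub_atTop [μ.IsAddHaarMeasure] (hφ : Continuous φ)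
    (hφc : HasCompactSupport φ) (hv : Continuous v) (hM : ∀ x, ‖v x‖ ≤ M) (x x₀ : E) :
    Tendsto (fun T : ℝ => ∫ z, φ z • v (x + T • z) ∂μ - ∫ z, φ z • v (x₀ + T • z) ∂μ)
      atTop (𝓝 0) := by
  have shift_tendsto : Tendsto (fun T : ℝ => T⁻¹ • (x - x₀)) atTop (𝓝 0) := by
    simpa using (tendsto_inv_atTop_zero (𝕜 := ℝ)).smul_const (x - x₀)
  refine squeeze_zero_norm' ((eventually_ne_atTop 0).mono fun T hT =>
    norm_integral_smul_comp_add_smul_sub_le hφ hφc hv hM hT x x₀) ?_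
  simpa using ((tendsto_integral_norm_comp_sub_sub (μ := μ) hφ hφc).comp
    shift_tendsto).mul_const M

end WeightedAverage

section Laplacian

lemma contDiff_one_fderiv_apply {E F : Type*} [NormedAddCommGroup E] [NormedSpace ℝ E]
    [NormedAddCommGroup F] [NormedSpace ℝ F] {f : E → F} (hf : ContDiff ℝ 2 f) (e : E) :
    ContDiff ℝ 1 fun y => fderiv ℝ f y e :=
  (hf.fderiv_right (by norm_num)).clm_apply contDiff_const

variable {E F : Type*} [NormedAddCommGroup E] [InnerProductSpace ℝ E] [FiniteDimensional ℝ E]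
  [NormedAddCommGroup F] [NormedSpace ℝ F]

lemma laplacian_eq_sum_fderiv_fderiv {ι : Type*} [Fintype ι] (b : OrthonormalBasis ι ℝ E)
    {f : E → F} {x : E} (hf : ContDiffAt ℝ 2 f x) :
    Δ f x = ∑ i, fderiv ℝ (fun y => fderiv ℝ f y (b i)) x (b i) := by
  have hdiff : DifferentiableAt ℝ (fderiv ℝ f) x :=
    (hf.fderiv_right (m := 1) (by norm_num)).differentiableAt one_ne_zero
  rw [laplacian_eq_iteratedFDeriv_orthonormalBasis f b]
  refine Finset.sum_congr rfl fun i _ => ?_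
  simp [iteratedFDeriv_two_apply, fderiv_clm_apply hdiff (differentiableAt_const _)]

lemma continuous_laplacian {f : E → F} (hf : ContDiff ℝ 2 f) : Continuous (Δ f) := by
  rw [laplacian_eq_iteratedFDeriv_stdOrthonormalBasis]
  exact continuous_finsetSum _ fun i _ => (hf.continuous_iteratedFDeriv le_rfl).eval_const _

lemma HarmonicOnSet.harmonicOnNhd {n : ℕ} {f : EuclideanSpace ℝ (Fin n) → ℝ}
    {Ω : Set (EuclideanSpace ℝ (Fin n))} (hf : HarmonicOnSet f Ω) (hΩ : IsOpen Ω) :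
    HarmonicOnNhd f Ω := by
  have hC2 (x) (hx : x ∈ Ω) : ContDiffAt ℝ 2 f x :=
    (hf.1.contDiffAt (hΩ.mem_nhds hx)).of_le (WithTop.coe_le_coe.2 le_top)
  refine fun x hx => ⟨hC2 x hx, ?_⟩
  filter_upwards [hΩ.mem_nhds hx] with y hy
  rw [laplacian_eq_sum_fderiv_fderiv (EuclideanSpace.basisFun (Fin n) ℝ) (hC2 y hy)]
  simp only [EuclideanSpace.basisFun_apply]
  exact hf.2 y hy

lemma laplacian_comp_norm_sub_sq {h h' h'' : ℝ → ℝ} (hh : ContDiff ℝ 2 h)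
    (hh' : ∀ s, HasDerivAt h (h' s) s) (hh'' : ∀ s, HasDerivAt h' (h'' s) s) (x y : E) :
    Δ (fun y => h (‖y - x‖ ^ 2)) y =
      4 * ‖y - x‖ ^ 2 * h'' (‖y - x‖ ^ 2) + 2 * finrank ℝ E * h' (‖y - x‖ ^ 2) := by
  let b := stdOrthonormalBasis ℝ E
  have chain {k k' : ℝ → ℝ} (hk : ∀ s, HasDerivAt k (k' s) s) (y : E) :
      HasFDerivAt (fun y => k (‖y - x‖ ^ 2)) (k' (‖y - x‖ ^ 2) • 2 • innerSL ℝ (y - x)) y :=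
    (hk _).comp_hasFDerivAt y ((hasFDerivAt_id y).sub_const x).norm_sq
  have first (i) (y : E) : fderiv ℝ (fun y => h (‖y - x‖ ^ 2)) y (b i) =
      h' (‖y - x‖ ^ 2) * (2 * inner ℝ (b i) (y - x)) := by
    rw [(chain hh' y).fderiv, real_inner_comm]
    simp [-map_sub]
  have second (i) : fderiv ℝ (fun y => h' (‖y - x‖ ^ 2) * (2 * inner ℝ (b i) (y - x))) y (b i) =
      4 * h'' (‖y - x‖ ^ 2) * inner ℝ (b i) (y - x) ^ 2 + 2 * h' (‖y - x‖ ^ 2) := by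
    have hlin : HasFDerivAt (fun y => 2 * inner ℝ (b i) (y - x)) ((2 : ℝ) • innerSL ℝ (b i)) y :=
      (((innerSL ℝ (b i)).hasFDerivAt.comp y ((hasFDerivAt_id y).sub_const x))).const_mul 2
    rw [(HasFDerivAt.fun_mul (chain hh'' y) hlin).fderiv, real_inner_comm]
    simp only [add_apply, smul_apply, coe_innerSL_apply, inner_self_eq_norm_sq_to_K,
      b.norm_eq_one, Real.ringHom_apply, one_pow, smul_eq_mul, mul_one, nsmul_eq_mul,
      Nat.cast_ofNat]
    ring
  have hC2 : ContDiff ℝ 2 fun y : E => h (‖y - x‖ ^ 2) :=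
    hh.comp ((contDiff_id.sub contDiff_const).norm_sq ℝ)
  rw [laplacian_eq_sum_fderiv_fderiv b hC2.contDiffAt]
  simp_rw [first, second]
  rw [Finset.sum_add_distrib, ← Finset.mul_sum, b.sum_sq_inner_right, Finset.sum_const]
  simp only [Finset.card_univ, Fintype.card_fin, nsmul_eq_mul]
  ring

lemma integral_smul_fderiv_apply_eq_neg [MeasurableSpace E] [BorelSpace E] {g : E → ℝ} {v : E → F}
    (hg : ContDiff ℝ 1 g) (hgc : HasCompactSupport g) (hv : ContDiff ℝ 1 v) (e : E) :
    ∫ y, g y • fderiv ℝ v y e = -∫ y, fderiv ℝ g y e • v y :=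
  integral_smul_fderiv_eq_neg_fderiv_smul_of_integrable
    (integrable_smul_of_hasCompactSupport (by fun_prop) (hgc.fderiv_apply ℝ e) hv.continuous)
    (integrable_smul_of_hasCompactSupport hg.continuous hgc (by fun_prop))
    (integrable_smul_of_hasCompactSupport hg.continuous hgc hv.continuous)
    (fun x _ => (hg.differentiable one_ne_zero) x) (fun x _ => (hv.differentiable one_ne_zero) x)

lemma integral_smul_laplacian_eq [MeasurableSpace E] [BorelSpace E] {g : E → ℝ} {v : E → F}
    (hg : ContDiff ℝ 2 g) (hgc : HasCompactSupport g) (hv : ContDiff ℝ 2 v) :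
    ∫ y, g y • Δ v y = ∫ y, Δ g y • v y := by
  let b := stdOrthonormalBasis ℝ E
  have hg' (i) : ContDiff ℝ 1 fun y => fderiv ℝ g y (b i) := contDiff_one_fderiv_apply hg _
  have hv' (i) : ContDiff ℝ 1 fun y => fderiv ℝ v y (b i) := contDiff_one_fderiv_apply hv _
  have parts (i) : ∫ y, g y • fderiv ℝ (fun y => fderiv ℝ v y (b i)) y (b i) =
      ∫ y, fderiv ℝ (fun y => fderiv ℝ g y (b i)) y (b i) • v y := by
    rw [integral_smul_fderiv_apply_eq_neg (hg.of_le (by norm_num)) hgc (hv' i),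
      integral_smul_fderiv_apply_eq_neg (hg' i) (hgc.fderiv_apply ℝ _)
        (hv.of_le (by norm_num)), neg_neg]
  simp_rw [laplacian_eq_sum_fderiv_fderiv b hg.contDiffAt,
    laplacian_eq_sum_fderiv_fderiv b hv.contDiffAt, Finset.smul_sum, Finset.sum_smul]
  rw [integral_finsetSum, integral_finsetSum]
  · exact Finset.sum_congr rfl fun i _ => parts i
  · intro i _
    have := hg' i
    exact integrable_smul_of_hasCompactSupport (by fun_prop)
      ((hgc.fderiv_apply ℝ _).fderiv_apply ℝ _) hv.continuous
  · intro i _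
    have := hv' i
    exact integrable_smul_of_hasCompactSupport hg.continuous hgc (by fun_prop)

end Laplacian

section Epanechnikov

variable {E : Type*} [NormedAddCommGroup E]

/-- The Epanechnikov kernel `(1 - ‖z‖²)₊`, the (unnormalised) density with which functions are
averaged over balls. -/
def epanechnikov (z : E) : ℝ := max (1 - ‖z‖ ^ 2) 0

lemma continuous_epanechnikov : Continuous (epanechnikov : E → ℝ) := by
  unfold epanechnikov
  fun_prop

variable [NormedSpace ℝ E] [FiniteDimensional ℝ E]

lemma hasCompactSupport_epanechnikov : HasCompactSupport (epanechnikov : E → ℝ) := by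
  have := FiniteDimensional.proper_real E
  refine .intro (isCompact_closedBall 0 1) fun z hz => max_eq_right ?_
  rw [mem_closedBall_zero_iff, not_le] at hz
  nlinarith

lemma integral_epanechnikov_pos [MeasurableSpace E] [BorelSpace E] {μ : Measure E}
    [IsFiniteMeasureOnCompacts μ] [μ.IsOpenPosMeasure] : 0 < ∫ z, epanechnikov z ∂μ :=
  continuous_epanechnikov.integral_pos_of_hasCompactSupport_nonneg_nonzero
    hasCompactSupport_epanechnikov (fun _ => le_max_right _ _) (x := 0) (by simp [epanechnikov])

end Epanechnikov

section NewtonKernel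

/-- The factor relating the Laplacian of the Newton kernel in dimension `n`, truncated at radius
`r`, to the Epanechnikov kernel of the ball of radius `r`. It is `4 * p * (1 - p) * (2 - p)` for
`p = 1 - n / 2`. -/
noncomputable def newtonConstant (n : ℕ) : ℝ := (2 - n) * n * (n + 2) / 2

lemma newtonConstant_ne_zero {n : ℕ} (hn : 3 ≤ n) : newtonConstant n ≠ 0 := by
  have hn' : (3 : ℝ) ≤ n := mod_cast hn
  have hneg : (2 - n : ℝ) < 0 := by linarith
  exact div_ne_zero (mul_ne_zero (mul_ne_zero hneg.ne (by positivity)) (by positivity)) two_ne_zero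

variable {E F : Type*} [NormedAddCommGroup E] [InnerProductSpace ℝ E]
  [NormedAddCommGroup F] [NormedSpace ℝ F] {r T : ℝ}

/-- The Newton kernel `‖y‖ ^ (2 - n)`, modified inside the ball of radius `r` so as to become of
class `C²` on the whole space. -/
noncomputable def truncatedNewtonKernel (r : ℝ) (y : E) : ℝ :=
  truncatedRpow (1 - finrank ℝ E / 2) (r ^ 2) (‖y‖ ^ 2)

lemma sq_rpow_one_sub_half {s : ℝ} (hs : 0 ≤ s) (d : ℝ) : (s ^ 2) ^ (1 - d / 2) = s ^ (2 - d) := by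
  rw [← Real.rpow_two, ← Real.rpow_mul hs]
  ring_nf

lemma truncatedNewtonKernel_of_le (hr : 0 ≤ r) {y : E} (hy : r ≤ ‖y‖) :
    truncatedNewtonKernel r y = ‖y‖ ^ ((2 : ℝ) - finrank ℝ E) := by
  rw [truncatedNewtonKernel, truncatedRpow_of_le (by gcongr), sq_rpow_one_sub_half (norm_nonneg y)]

lemma contDiff_truncatedNewtonKernel (hr : 0 < r) :
    ContDiff ℝ 2 (truncatedNewtonKernel r : E → ℝ) :=
  (contDiff_truncatedRpow (by positivity)).comp (contDiff_id.norm_sq ℝ)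

lemma exists_forall_abs_truncatedNewtonKernel_le (hn : 2 ≤ finrank ℝ E) :
    ∃ C : ℝ, ∀ r > 0, ∀ y : E, |truncatedNewtonKernel r y| ≤ C * r ^ ((2 : ℝ) - finrank ℝ E) := by
  have hn' : (2 : ℝ) ≤ finrank ℝ E := mod_cast hn
  let p : ℝ := 1 - finrank ℝ E / 2
  refine ⟨1 + |p| + |p * (p - 1) / 2|, fun r hr y => ?_⟩
  rw [← sq_rpow_one_sub_half hr.le]
  exact abs_truncatedRpow_le (by linarith) (by positivity) (by positivity)

variable [FiniteDimensional ℝ E]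

lemma laplacian_truncatedNewtonKernel_sub (hr : 0 < r) (x y : E) :
    Δ (fun y => truncatedNewtonKernel r (y - x)) y =
      newtonConstant (finrank ℝ E) *
        ((r ^ finrank ℝ E)⁻¹ * epanechnikov (r⁻¹ • (y - x))) := by
  have hc : 0 < r ^ 2 := by positivity
  set n := finrank ℝ E
  have hpow : (r ^ 2) ^ ((1 - n / 2 : ℝ) - 2) = (r ^ 2)⁻¹ * (r ^ n)⁻¹ := by
    rw [← Real.rpow_natCast r n, ← Real.rpow_two, ← Real.rpow_neg hr.le, ← Real.rpow_neg hr.le,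
      ← Real.rpow_add hr, ← Real.rpow_mul hr.le]
    ring_nf
  have hbump : (r ^ 2)⁻¹ * max (r ^ 2 - ‖y - x‖ ^ 2) 0 = epanechnikov (r⁻¹ • (y - x)) := by
    rw [epanechnikov, mul_max_of_nonneg _ _ (by positivity), norm_smul, norm_inv,
      Real.norm_of_nonneg hr.le, mul_zero]
    congr 1
    field_simp
  calc Δ (fun y => truncatedNewtonKernel r (y - x)) y
      = 4 * ‖y - x‖ ^ 2 * truncatedRpowDeriv₂ (1 - n / 2) (r ^ 2) (‖y - x‖ ^ 2) +
        4 * (1 - (1 - n / 2)) * truncatedRpowDeriv (1 - n / 2) (r ^ 2) (‖y - x‖ ^ 2) := by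
        unfold truncatedNewtonKernel
        rw [laplacian_comp_norm_sub_sq (contDiff_truncatedRpow hc) (hasDerivAt_truncatedRpow hc)
          (hasDerivAt_truncatedRpowDeriv hc)]
        ring
    _ = _ := by
        rw [four_mul_truncatedRpowDeriv₂_add hc, hpow, ← hbump, newtonConstant]
        ring

variable [MeasurableSpace E] [BorelSpace E]

/-- The average of `v` over the ball of radius `r` around `x`, up to the constant factor
`∫ z, epanechnikov z`. -/
noncomputable def epanechnikovAverage (v : E → F) (x : E) (r : ℝ) : F :=
  ∫ z, epanechnikov z • v (x + r • z)

lemma integral_laplacian_truncatedNewtonKernel_sub_smul (hr : 0 < r) (v : E → F) (x : E) :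
    ∫ y, Δ (fun y => truncatedNewtonKernel r (y - x)) y • v y =
      newtonConstant (finrank ℝ E) • epanechnikovAverage v x r := by
  simp_rw [laplacian_truncatedNewtonKernel_sub hr, mul_smul (newtonConstant _)]
  rw [integral_smul, integral_inv_pow_mul_comp_inv_smul_sub_smul hr, epanechnikovAverage]

lemma integral_truncatedNewtonKernel_sub_smul_laplacian {v : E → F} (hv : ContDiff ℝ 2 v)
    (hr : 0 < r) (hT : 0 < T) (x : E) :
    ∫ y, (truncatedNewtonKernel r (y - x) - truncatedNewtonKernel T (y - x)) • Δ v y =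
      newtonConstant (finrank ℝ E) •
        (epanechnikovAverage v x r - epanechnikovAverage v x T) := by
  have smooth {s : ℝ} (hs : 0 < s) : ContDiff ℝ 2 fun y => truncatedNewtonKernel s (y - x) :=
    (contDiff_truncatedNewtonKernel hs).comp (contDiff_id.sub contDiff_const)
  have compact : HasCompactSupport fun y =>
      truncatedNewtonKernel r (y - x) - truncatedNewtonKernel T (y - x) := by
    refine .intro (isCompact_closedBall x (max r T)) fun y hy => ?_
    rw [mem_closedBall_iff_norm, not_le, max_lt_iff] at hy
    rw [truncatedNewtonKernel_of_le hr.le hy.1.le, truncatedNewtonKernel_of_le hT.le hy.2.le,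
      sub_self]
  have integrable {s : ℝ} (hs : 0 < s) :
      Integrable fun y => Δ (fun y => truncatedNewtonKernel s (y - x)) y • v y := by
    refine integrable_smul_of_hasCompactSupport (continuous_laplacian (smooth hs)) ?_ hv.continuous
    rw [funext (laplacian_truncatedNewtonKernel_sub hs x)]
    exact ((hasCompactSupport_epanechnikov.comp_homeomorph ((Homeomorph.subRight x).trans
      (Homeomorph.smulOfNeZero s⁻¹ (inv_ne_zero hs.ne')))).mul_left).mul_left
  have laplacian_sub (y : E) :
      Δ (fun y => truncatedNewtonKernel r (y - x) - truncatedNewtonKernel T (y - x)) y =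
        Δ (fun y => truncatedNewtonKernel r (y - x)) y -
          Δ (fun y => truncatedNewtonKernel T (y - x)) y :=
    (smooth hr).contDiffAt.laplacian_sub (smooth hT).contDiffAt
  rw [integral_smul_laplacian_eq ((smooth hr).sub (smooth hT)) compact hv]
  simp_rw [laplacian_sub, sub_smul]
  rw [integral_sub (integrable hr) (integrable hT), smul_sub,
    integral_laplacian_truncatedNewtonKernel_sub_smul hr,
    integral_laplacian_truncatedNewtonKernel_sub_smul hT]

end NewtonKernel

section NormRpow

lemma abs_rpow_sub_rpow_le {q m s t : ℝ} (hq : q ≤ 1) (hm : 0 < m) (hs : m ≤ s) (ht : m ≤ t) :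
    |s ^ q - t ^ q| ≤ |q| * m ^ (q - 1) * |s - t| := by
  refine (convex_Ici m).norm_image_sub_le_of_norm_hasDerivWithin_le (f := fun s => s ^ q)
    (f' := fun s => q * s ^ (q - 1)) (fun u hu => ?_) (fun u hu => ?_) ht hs
  · exact (Real.hasDerivAt_rpow_const (Or.inl (hm.trans_le hu).ne')).hasDerivWithinAt
  · rw [norm_mul, Real.norm_of_nonneg (Real.rpow_nonneg (hm.le.trans hu) _), Real.norm_eq_abs]
    gcongr ?_ * ?_
    exact Real.rpow_le_rpow_of_nonpos hm hu (by linarith)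

lemma abs_norm_sub_rpow_sub_norm_rpow_le {E : Type*} [SeminormedAddCommGroup E] {q r ρ : ℝ}
    (hq : q ≤ 1) (hrρ : r < ρ) {x y : E} (hy : ‖y‖ ≤ r) (hx : ρ ≤ ‖x‖) :
    |‖y - x‖ ^ q - ‖x‖ ^ q| ≤ |q| * (1 - r / ρ) ^ (q - 1) * r * ‖x‖ ^ (q - 1) := by
  have hr : 0 ≤ r := (norm_nonneg y).trans hy
  have hρ : 0 < ρ := hr.trans_lt hrρ
  have hθ : 0 < 1 - r / ρ := sub_pos.2 ((div_lt_one hρ).2 hrρ)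
  have hx₀ : 0 < ‖x‖ := hρ.trans_le hx
  have hdist : (1 - r / ρ) * ‖x‖ ≤ ‖y - x‖ := by
    have : r ≤ r / ρ * ‖x‖ := by
      rw [div_mul_eq_mul_div, le_div_iff₀ hρ]
      gcongr
    linarith [norm_sub_norm_le x y, norm_sub_rev x y]
  have hle : (1 - r / ρ) * ‖x‖ ≤ ‖x‖ :=
    mul_le_of_le_one_left hx₀.le (sub_le_self 1 (by positivity))
  have hdiff : |‖y - x‖ - ‖x‖| ≤ r := by
    simpa [norm_sub_rev] using (abs_norm_sub_norm_le (x - y) x).trans (by simpa using hy)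
  calc |‖y - x‖ ^ q - ‖x‖ ^ q|
      ≤ |q| * ((1 - r / ρ) * ‖x‖) ^ (q - 1) * |‖y - x‖ - ‖x‖| :=
        abs_rpow_sub_rpow_le hq (mul_pos hθ hx₀) hdist hle
    _ ≤ |q| * ((1 - r / ρ) * ‖x‖) ^ (q - 1) * r := by gcongr
    _ = |q| * (1 - r / ρ) ^ (q - 1) * r * ‖x‖ ^ (q - 1) := by
        rw [Real.mul_rpow hθ.le hx₀.le]
        ring

end NormRpow

section NewtonPotential

variable {E F : Type*} [NormedAddCommGroup E] [InnerProductSpace ℝ E] [FiniteDimensional ℝ E]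
  [MeasurableSpace E] [BorelSpace E] [NormedAddCommGroup F] [NormedSpace ℝ F]
  {r T M : ℝ} {f v : E → F} {x : E}

/-- The Newton potential of the density `f`, without the usual normalising constant. -/
noncomputable def newtonPotential (f : E → F) (x : E) : F :=
  ∫ y, ‖y - x‖ ^ ((2 : ℝ) - finrank ℝ E) • f y

lemma newtonPotential_eq_integral_truncatedNewtonKernel (hr : 0 ≤ r)
    (hf : ∀ y, f y ≠ 0 → r ≤ ‖y - x‖) :
    newtonPotential f x = ∫ y, truncatedNewtonKernel r (y - x) • f y := by
  refine integral_congr_ae (.of_forall fun y => ?_)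
  by_cases hy : f y = 0
  · simp only [hy, smul_zero]
  · simp only [truncatedNewtonKernel_of_le hr (hf y hy)]

lemma integrable_truncatedNewtonKernel_sub_smul (hn : 2 ≤ finrank ℝ E) (hf : Integrable f)
    (hr : 0 < r) (x : E) : Integrable fun y => truncatedNewtonKernel r (y - x) • f y := by
  obtain ⟨C, hC⟩ := exists_forall_abs_truncatedNewtonKernel_le hn
  exact hf.bdd_smul _ ((contDiff_truncatedNewtonKernel hr).continuous.comp
    (by fun_prop)).aestronglyMeasurable (.of_forall fun y => hC r hr (y - x))

lemma tendsto_integral_truncatedNewtonKernel_sub_smul_atTop (hn : 3 ≤ finrank ℝ E)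
    (hf : Integrable f) (x : E) :
    Tendsto (fun T => ∫ y, truncatedNewtonKernel T (y - x) • f y) atTop (𝓝 0) := by
  obtain ⟨C, hC⟩ := exists_forall_abs_truncatedNewtonKernel_le (E := E) (by omega)
  have hn' : (3 : ℝ) ≤ finrank ℝ E := mod_cast hn
  have bound {T : ℝ} (hT : 0 < T) : ‖∫ y, truncatedNewtonKernel T (y - x) • f y‖ ≤
      C * T ^ (-(finrank ℝ E - 2 : ℝ)) * ∫ y, ‖f y‖ := by
    rw [← integral_const_mul, neg_sub]
    refine norm_integral_le_of_norm_le (hf.norm.const_mul _) (.of_forall fun y => ?_)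
    rw [norm_smul]
    gcongr
    exact hC T hT _
  have decay : Tendsto (fun T : ℝ => C * T ^ (-(finrank ℝ E - 2 : ℝ)) * ∫ y, ‖f y‖) atTop
      (𝓝 (C * 0 * ∫ y, ‖f y‖)) :=
    ((tendsto_rpow_neg_atTop (by linarith)).const_mul C).mul_const _
  rw [mul_zero, zero_mul] at decay
  exact squeeze_zero_norm' ((eventually_gt_atTop 0).mono fun T hT => bound hT) decay

lemma exists_norm_newtonPotential_sub_le (hn : 2 ≤ finrank ℝ E) (hf : Integrable f) {r ρ : ℝ}
    (hr : ∀ y, f y ≠ 0 → ‖y‖ ≤ r) (hrρ : r < ρ) :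
    ∃ C : ℝ, ∀ x, ρ ≤ ‖x‖ →
      ‖newtonPotential f x - ‖x‖ ^ ((2 : ℝ) - finrank ℝ E) • ∫ y, f y‖ ≤
        C * ‖x‖ ^ ((1 : ℝ) - finrank ℝ E) := by
  set q : ℝ := 2 - finrank ℝ E
  have hn' : (2 : ℝ) ≤ finrank ℝ E := mod_cast hn
  refine ⟨|q| * (1 - r / ρ) ^ (q - 1) * r * ∫ y, ‖f y‖, fun x hx => ?_⟩
  have far (y : E) (hy : f y ≠ 0) : ρ - r ≤ ‖y - x‖ := by
    linarith [norm_sub_norm_le x y, norm_sub_rev x y, hr y hy]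
  rw [newtonPotential_eq_integral_truncatedNewtonKernel (sub_nonneg.2 hrρ.le) far,
    ← integral_smul, ← integral_sub
      (integrable_truncatedNewtonKernel_sub_smul hn hf (sub_pos.2 hrρ) x) (hf.fun_smul _),
    mul_right_comm, ← integral_const_mul, show (1 : ℝ) - finrank ℝ E = q - 1 by ring]
  refine norm_integral_le_of_norm_le (hf.norm.const_mul _) (.of_forall fun y => ?_)
  by_cases hy : f y = 0
  · simp [hy]
  rw [truncatedNewtonKernel_of_le (sub_nonneg.2 hrρ.le) (far y hy), ← sub_smul, norm_smul]
  gcongr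
  exact abs_norm_sub_rpow_sub_norm_rpow_le (by linarith) hrρ (hr y hy) hx

variable [CompleteSpace F]

lemma newtonPotential_laplacian_sub_integral (hn : 2 ≤ finrank ℝ E) (hv : ContDiff ℝ 2 v)
    (hM : ∀ x, ‖v x‖ ≤ M) (hΔ : Integrable (Δ v)) (hx : x ∉ tsupport (Δ v)) (hT : 0 < T) :
    newtonPotential (Δ v) x - ∫ y, truncatedNewtonKernel T (y - x) • Δ v y =
      newtonConstant (finrank ℝ E) •
        ((∫ z : E, epanechnikov z) • v x - epanechnikovAverage v x T) := by
  obtain ⟨ε, hε, hball⟩ := isOpen_iff.1 (isClosed_tsupport (Δ v)).isOpen_compl x hx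
  have far {y : E} (hy : Δ v y ≠ 0) : ε ≤ ‖y - x‖ := by
    rw [← dist_eq_norm]
    exact not_lt.1 fun hlt => hball hlt (subset_tsupport _ hy)
  have small {r : ℝ} (hr : 0 < r) (hrε : r < ε) :
      newtonConstant (finrank ℝ E) •
        (epanechnikovAverage v x r - epanechnikovAverage v x T) =
      newtonPotential (Δ v) x - ∫ y, truncatedNewtonKernel T (y - x) • Δ v y := by
    rw [newtonPotential_eq_integral_truncatedNewtonKernel hr.le fun y hy => hrε.le.trans (far hy),
      ← integral_sub (integrable_truncatedNewtonKernel_sub_smul hn hΔ hr x)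
        (integrable_truncatedNewtonKernel_sub_smul hn hΔ hT x),
      ← integral_truncatedNewtonKernel_sub_smul_laplacian hv hr hT]
    simp only [sub_smul]
  have average_tendsto : Tendsto (epanechnikovAverage v x) (𝓝[>] 0)
      (𝓝 ((∫ z : E, epanechnikov z) • v x)) :=
    (tendsto_integral_smul_comp_add_smul_zero
      (continuous_epanechnikov.integrable_of_hasCompactSupport hasCompactSupport_epanechnikov)
      hv.continuous hM x).mono_left nhdsWithin_le_nhds
  refine tendsto_nhds_unique (tendsto_const_nhds.congr' ?_)
    ((average_tendsto.sub_const (epanechnikovAverage v x T)).const_smul _)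
  filter_upwards [Ioo_mem_nhdsGT hε] with r hr using (small hr.1 hr.2).symm

lemma exists_eq_add_smul_newtonPotential_laplacian (hn : 3 ≤ finrank ℝ E) (hv : ContDiff ℝ 2 v)
    (hM : ∀ x, ‖v x‖ ≤ M) (hΔ : Integrable (Δ v)) :
    ∃ (a : F) (c : ℝ), ∀ x ∉ tsupport (Δ v), v x = a + c • newtonPotential (Δ v) x := by
  set κ := newtonConstant (finrank ℝ E)
  have hκ : κ ≠ 0 := newtonConstant_ne_zero hn
  set m : ℝ := ∫ z : E, epanechnikov z
  have hm : m ≠ 0 := integral_epanechnikov_pos.ne'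
  have average_tendsto {x : E} (hx : x ∉ tsupport (Δ v)) :
      Tendsto (epanechnikovAverage v x) atTop (𝓝 (m • v x - κ⁻¹ • newtonPotential (Δ v) x)) := by
    have key := (tendsto_integral_truncatedNewtonKernel_sub_smul_atTop hn hΔ x).const_sub
      (newtonPotential (Δ v) x)
    have := (key.const_smul κ⁻¹).const_sub (m • v x)
    rw [sub_zero] at this
    refine this.congr' ?_
    filter_upwards [eventually_gt_atTop 0] with T hT
    rw [newtonPotential_laplacian_sub_integral (by omega) hv hM hΔ hx hT,
      inv_smul_smul₀ hκ, sub_sub_cancel]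
  have constant {x x₀ : E} (hx : x ∉ tsupport (Δ v)) (hx₀ : x₀ ∉ tsupport (Δ v)) :
      m • v x - κ⁻¹ • newtonPotential (Δ v) x = m • v x₀ - κ⁻¹ • newtonPotential (Δ v) x₀ :=
    sub_eq_zero.1 <| tendsto_nhds_unique ((average_tendsto hx).sub (average_tendsto hx₀))
      (tendsto_integral_smul_comp_add_smul_sub_atTop continuous_epanechnikov
        hasCompactSupport_epanechnikov hv.continuous hM x x₀)
  by_cases hne : ∃ x₀, x₀ ∉ tsupport (Δ v)
  · obtain ⟨x₀, hx₀⟩ := hne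
    refine ⟨m⁻¹ • (m • v x₀ - κ⁻¹ • newtonPotential (Δ v) x₀), m⁻¹ * κ⁻¹, fun x hx => ?_⟩
    rw [← constant hx hx₀, smul_sub, mul_smul, inv_smul_smul₀ hm, sub_add_cancel]
  · exact ⟨0, 0, fun x hx => (hne ⟨x, hx⟩).elim⟩

end NewtonPotential

section Exterior

lemma exists_contDiff_eqOn_of_contDiffOn_exterior {E F : Type*} [NormedAddCommGroup E]
    [NormedSpace ℝ E] [HasContDiffBump E] [NormedAddCommGroup F] [NormedSpace ℝ F] {R ρ M : ℝ}
    {U : E → F} {k : ℕ∞} (hU : ContDiffOn ℝ k U {x | R < ‖x‖})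
    (hM : ∀ x, R < ‖x‖ → ‖U x‖ ≤ M) (hRρ : R < ρ) (hρ : 0 < ρ) :
    ∃ v : E → F, ContDiff ℝ k v ∧ (∀ x, ‖v x‖ ≤ |M|) ∧ ∀ x, ρ ≤ ‖x‖ → v x = U x := by
  obtain ⟨r, hr, hrρ⟩ := exists_between (max_lt hRρ hρ)
  obtain ⟨hRr, hr₀⟩ := max_lt_iff.1 hr
  let φ : ContDiffBump (0 : E) := ⟨r, ρ, hr₀, hrρ⟩
  have inside (x : E) (hx : ‖x‖ ≤ r) : (1 - φ x) • U x = 0 := by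
    rw [φ.one_of_mem_closedBall (mem_closedBall_zero_iff.2 hx), sub_self, zero_smul]
  refine ⟨fun x => (1 - φ x) • U x, contDiff_iff_contDiffAt.2 fun x => ?_, fun x => ?_,
    fun x hx => ?_⟩
  · rcases lt_or_ge R ‖x‖ with hx | hx
    · exact (contDiff_const.sub φ.contDiff).contDiffAt.smul
        (hU.contDiffAt ((isOpen_lt continuous_const continuous_norm).mem_nhds hx))
    · refine contDiffAt_const (c := (0 : F)) |>.congr_of_eventuallyEq ?_
      filter_upwards [(isOpen_lt continuous_norm continuous_const).mem_nhds (hx.trans_lt hRr)]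
        with y hy using inside y (le_of_lt hy)
  · rcases lt_or_ge R ‖x‖ with hx | hx
    · rw [norm_smul, Real.norm_of_nonneg (sub_nonneg.2 φ.le_one)]
      exact (mul_le_of_le_one_left (norm_nonneg _) (sub_le_self 1 φ.nonneg)).trans
        ((hM x hx).trans (le_abs_self M))
    · exact (norm_eq_zero.2 (inside x (hx.trans hRr.le))).trans_le (abs_nonneg M)
  · simp only [φ.zero_of_le_dist (hx.trans_eq (dist_zero_right x).symm), sub_zero, one_smul]

variable {E F : Type*} [NormedAddCommGroup E] [InnerProductSpace ℝ E] [FiniteDimensional ℝ E]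
  [NormedAddCommGroup F] [NormedSpace ℝ F] {R ρ M : ℝ} {U v : E → F}

lemma tsupport_laplacian_subset_closedBall (hU : HarmonicOnNhd U {x | R < ‖x‖}) (hRρ : R < ρ)
    (hvU : ∀ x, ρ ≤ ‖x‖ → v x = U x) : tsupport (Δ v) ⊆ closedBall 0 ρ := by
  refine closure_minimal (fun x hx => ?_) isClosed_closedBall
  by_contra hxρ
  rw [mem_closedBall_zero_iff, not_le] at hxρ
  have hvU' : v =ᶠ[𝓝 x] U := by
    filter_upwards [(isOpen_lt continuous_const continuous_norm).mem_nhds hxρ] with y hy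
      using hvU y (le_of_lt hy)
  exact hx ((laplacian_congr_nhds hvU').eq_of_nhds.trans (hU x (hRρ.trans hxρ)).2.eq_of_nhds)

theorem exterior_harmonic_expansion_general [CompleteSpace F] (hn : 3 ≤ finrank ℝ E)
    (hRρ : R < ρ) (hρ : 0 < ρ) (hU : HarmonicOnNhd U {x | R < ‖x‖})
    (hM : ∀ x, R < ‖x‖ → ‖U x‖ ≤ M) :
    ∃ (a b : F) (C : ℝ), ∀ x, ρ ≤ ‖x‖ →
      ‖U x - a - ‖x‖ ^ ((2 : ℝ) - finrank ℝ E) • b‖ ≤ C * ‖x‖ ^ ((1 : ℝ) - finrank ℝ E) := by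
  borelize E
  obtain ⟨r, hr, hrρ⟩ := exists_between (max_lt hRρ hρ)
  obtain ⟨hRr, hr₀⟩ := max_lt_iff.1 hr
  obtain ⟨v, hv, hvM, hvU⟩ :=
    exists_contDiff_eqOn_of_contDiffOn_exterior hU.contDiffOn hM hRr hr₀
  have hsupp : tsupport (Δ v) ⊆ closedBall 0 r := tsupport_laplacian_subset_closedBall hU hRr hvU
  have hΔ : Integrable (Δ v) := (continuous_laplacian hv).integrable_of_hasCompactSupport
    ((isCompact_closedBall 0 r).of_isClosed_subset (isClosed_tsupport _) hsupp)
  obtain ⟨a, c, hrep⟩ := exists_eq_add_smul_newtonPotential_laplacian hn hv hvM hΔ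
  obtain ⟨C, hC⟩ := exists_norm_newtonPotential_sub_le (by omega) hΔ
    (fun y hy => mem_closedBall_zero_iff.1 (hsupp (subset_tsupport _ hy))) hrρ
  refine ⟨a, c • ∫ y, Δ v y, ‖c‖ * C, fun x hx => ?_⟩
  have hx' : x ∉ tsupport (Δ v) := fun hmem =>
    ((mem_closedBall_zero_iff.1 (hsupp hmem)).trans_lt hrρ).not_ge hx
  rw [← hvU x (hrρ.le.trans hx), hrep x hx', add_sub_cancel_left, smul_comm, ← smul_sub,
    norm_smul, mul_assoc]
  gcongr
  exact hC x hx

end Exterior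

/-- a bounded harmonic function on the exterior region `{‖x‖ > R}` in
`ℝⁿ`, `n ≥ 3`, admits an expansion `U(x) = a + b‖x‖^{2-n} + O(‖x‖^{1-n})`. -/
theorem exterior_harmonic_expansion
    (n : ℕ) (hn : 3 ≤ n) (R : ℝ) (hR : 0 < R)
    (U : EuclideanSpace ℝ (Fin n) → ℝ)
    (hbdd : ∃ C : ℝ, ∀ x : EuclideanSpace ℝ (Fin n), R < ‖x‖ → |U x| ≤ C)
    (hharm : HarmonicOnSet U {x : EuclideanSpace ℝ (Fin n) | R < ‖x‖}) :
    ∃ a b C : ℝ, ∀ x : EuclideanSpace ℝ (Fin n), 2 * R ≤ ‖x‖ →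
      |U x - a - b * ‖x‖ ^ ((2 : ℝ) - n)| ≤ C * ‖x‖ ^ ((1 : ℝ) - n) := by
  obtain ⟨M, hM⟩ := hbdd
  simpa only [finrank_euclideanSpace_fin, smul_eq_mul, mul_comm, Real.norm_eq_abs] using
    exterior_harmonic_expansion_general (hn.trans_eq finrank_euclideanSpace_fin.symm)
      (lt_two_mul_self hR) (mul_pos two_pos hR)
      (hharm.harmonicOnNhd (isOpen_lt continuous_const continuous_norm)) hM
end

section
/- There exists a constant C, depending only on the dimension n ≥ 3, with the following property: for every R > 0 and ε > 0, if W is continuous on {x ∈ ℝⁿ : ‖x‖ ≥ R}, harmonic on {‖x‖ > R}, satisfies W(x) → 0 and ‖x‖^{n-2}·W(x) → 0 as ‖x‖ → ∞, and |W(x)| ≤ ε for every x with ‖x‖ = R, then |W(x)| ≤ C·ε·(R/‖x‖)^{n-1} for all x with ‖x‖ ≥ 2R. -/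
open Filter MeasureTheory

/-!
Fix two points `x`, `y` of equal norm and let `σ` be the reflection that exchanges them. The odd
part `f - f ∘ σ` vanishes on the mirror hyperplane, so a barrier on half-balls centred there bounds
it by a multiple of the distance to the hyperplane on the sphere of radius `2 * r`. Comparison with
the dipole `⟪x - y, z⟫ / ‖z‖ ^ n` on the half-exterior turns this into
`f x - f y ≤ C * ε * (r / ‖x‖) ^ (n - 1)`. Finally every sphere contains a point where `f ≤ 0`:
otherwise `f` would dominate a positive multiple of `‖z‖ ^ (2 - n)`, contradicting
`‖z‖ ^ (n - 2) * f z → 0`. Choosing `y` to be such a point bounds `f x`, and `-f` is treated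
likewise.
-/

open Bornology InnerProductSpace Laplacian Metric Module Topology
open scoped Gradient RealInnerProductSpace

section LaplacianCalculus

variable {E F : Type*} [NormedAddCommGroup E] [InnerProductSpace ℝ E]
  [NormedAddCommGroup F] [NormedSpace ℝ F] {x : E}

lemma iteratedDeriv_two_comp_line {f : E → F} (hf : ContDiffAt ℝ 2 f x) (v : E) :
    iteratedDeriv 2 (fun t : ℝ => f (x + t • v)) 0 = iteratedFDeriv ℝ 2 f x ![v, v] := by
  have hderiv : deriv (fun t : ℝ => x + t • v) = fun _ => v := by
    funext t
    simp [deriv_smul_const]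
  have hderiv₂ : iteratedDeriv 2 (fun t : ℝ => x + t • v) 0 = 0 := by
    rw [iteratedDeriv_succ, iteratedDeriv_one, hderiv, deriv_const]
  have hcomp := iteratedDeriv_vcomp_two (g := f) (f := fun t : ℝ => x + t • v) (x := 0)
    (by simpa using hf) (by fun_prop)
  rw [hderiv₂, map_zero, add_zero, hderiv, zero_smul, add_zero] at hcomp
  have hconst : ![v, v] = fun _ => v := by
    funext i
    fin_cases i <;> rfl
  rwa [hconst]

lemma deriv_comp_line [CompleteSpace E] {f : E → ℝ} (hf : DifferentiableAt ℝ f x) (v : E) :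
    deriv (fun t : ℝ => f (x + t • v)) 0 = ⟪∇ f x, v⟫ := by
  rw [← toDual_apply_apply (𝕜 := ℝ), toDual_gradient]
  exact hf.lineDeriv_eq_fderiv

lemma gradient_comp [CompleteSpace E] {φ : ℝ → ℝ} {f : E → ℝ}
    (hφ : DifferentiableAt ℝ φ (f x)) (hf : DifferentiableAt ℝ f x) :
    ∇ (φ ∘ f) x = deriv φ (f x) • ∇ f x := by
  rw [gradient, (hφ.hasDerivAt.comp_hasFDerivAt x hf.hasFDerivAt).fderiv, map_smulₛₗ]
  rfl

lemma gradient_inner_sub [CompleteSpace E] (a p : E) : ∇ (fun y : E => ⟪a, y - p⟫) x = a := by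
  refine HasGradientAt.gradient (hasGradientAt_iff_hasFDerivAt.2 ?_)
  exact (innerSL ℝ a).hasFDerivAt.comp x ((hasFDerivAt_id x).sub_const p)

lemma gradient_norm_sq [CompleteSpace E] : ∇ (fun y : E => ‖y‖ ^ 2) x = (2 : ℝ) • x := by
  refine HasGradientAt.gradient (hasGradientAt_iff_hasFDerivAt.2 ?_)
  exact (hasStrictFDerivAt_norm_sq x).hasFDerivAt.congr_fderiv (by ext; simp [two_smul])

lemma contDiff_inner_sub (a p : E) {k : WithTop ℕ∞} : ContDiff ℝ k fun y : E => ⟪a, y - p⟫ :=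
  contDiff_const.inner ℝ (contDiff_id.sub contDiff_const)

lemma contDiff_norm_sub_sq (p : E) {k : WithTop ℕ∞} : ContDiff ℝ k fun y : E => ‖y - p‖ ^ 2 :=
  (contDiff_id.sub contDiff_const).norm_sq ℝ

variable [FiniteDimensional ℝ E]

lemma laplacian_eq_sum_iteratedDeriv_two {ι : Type*} [Fintype ι] {f : E → F}
    (b : OrthonormalBasis ι ℝ E) (hf : ContDiffAt ℝ 2 f x) :
    Δ f x = ∑ i, iteratedDeriv 2 (fun t : ℝ => f (x + t • b i)) 0 := by
  simp only [laplacian_eq_iteratedFDeriv_orthonormalBasis f b, iteratedDeriv_two_comp_line hf]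

lemma harmonicAt_comp_linearIsometryEquiv {f : E → F} (σ : E ≃ₗᵢ[ℝ] E)
    (hf : HarmonicAt f (σ x)) : HarmonicAt (f ∘ σ) x := by
  refine ⟨hf.1.comp x σ.contDiff.contDiffAt, ?_⟩
  filter_upwards [σ.continuous.continuousAt.eventually hf.eventually] with y hy
  let b := stdOrthonormalBasis ℝ E
  calc Δ (f ∘ σ) y
      = ∑ i, iteratedDeriv 2 (fun t : ℝ => f (σ y + t • b.map σ i)) 0 := by
        simp [laplacian_eq_sum_iteratedDeriv_two b (hy.1.comp y σ.contDiff.contDiffAt)]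
    _ = Δ f (σ y) := (laplacian_eq_sum_iteratedDeriv_two (b.map σ) hy.1).symm
    _ = 0 := hy.2.eq_of_nhds

lemma laplacian_mul {f g : E → ℝ} (hf : ContDiffAt ℝ 2 f x) (hg : ContDiffAt ℝ 2 g x) :
    Δ (fun y => f y * g y) x = f x * Δ g x + 2 * ⟪∇ f x, ∇ g x⟫ + g x * Δ f x := by
  let b := stdOrthonormalBasis ℝ E
  have hsummand (i) : iteratedDeriv 2 (fun t : ℝ => f (x + t • b i) * g (x + t • b i)) 0 =
      f x * iteratedDeriv 2 (fun t : ℝ => g (x + t • b i)) 0 +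
        2 * (⟪∇ f x, b i⟫ * ⟪b i, ∇ g x⟫) +
        g x * iteratedDeriv 2 (fun t : ℝ => f (x + t • b i)) 0 := by
    have h := iteratedDeriv_mul (n := 2) (x := (0 : ℝ)) (f := fun t : ℝ => f (x + t • b i))
      (g := fun t : ℝ => g (x + t • b i)) (ContDiffAt.comp _ (by simpa using hf) (by fun_prop))
      (ContDiffAt.comp _ (by simpa using hg) (by fun_prop))
    simp only [Finset.sum_range_succ, Finset.sum_range_zero, Nat.choose, iteratedDeriv_one,
      iteratedDeriv_zero, deriv_comp_line (hf.differentiableAt two_ne_zero),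
      deriv_comp_line (hg.differentiableAt two_ne_zero), zero_smul, add_zero, zero_add,
      Nat.sub_zero, Nat.sub_self, Nat.add_one_sub_one, Nat.reduceAdd, Nat.cast_one,
      Nat.cast_ofNat] at h
    rw [real_inner_comm (∇ g x)]
    exact h.trans (by ring)
  simp only [laplacian_eq_sum_iteratedDeriv_two b (hf.mul hg),
    laplacian_eq_sum_iteratedDeriv_two b hf, laplacian_eq_sum_iteratedDeriv_two b hg, hsummand,
    Finset.sum_add_distrib, ← Finset.mul_sum, b.sum_inner_mul_inner]

lemma laplacian_comp {φ : ℝ → ℝ} {f : E → ℝ} (hφ : ContDiffAt ℝ 2 φ (f x))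
    (hf : ContDiffAt ℝ 2 f x) :
    Δ (φ ∘ f) x = iteratedDeriv 2 φ (f x) * ‖∇ f x‖ ^ 2 + deriv φ (f x) * Δ f x := by
  let b := stdOrthonormalBasis ℝ E
  have hsummand (i) : iteratedDeriv 2 (fun t : ℝ => (φ ∘ f) (x + t • b i)) 0 =
      iteratedDeriv 2 φ (f x) * ⟪b i, ∇ f x⟫ ^ 2 +
        deriv φ (f x) * iteratedDeriv 2 (fun t : ℝ => f (x + t • b i)) 0 := by
    have h := iteratedDeriv_comp_two (x := (0 : ℝ)) (f := fun t : ℝ => f (x + t • b i)) (g := φ)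
      (by simpa using hφ) (ContDiffAt.comp _ (by simpa using hf) (by fun_prop))
    rwa [deriv_comp_line (hf.differentiableAt two_ne_zero), zero_smul, add_zero,
      real_inner_comm] at h
  simp only [laplacian_eq_sum_iteratedDeriv_two b (hφ.comp x hf),
    laplacian_eq_sum_iteratedDeriv_two b hf, hsummand, Finset.sum_add_distrib, ← Finset.mul_sum,
    b.sum_sq_inner_right]

lemma harmonicAt_inner_sub (a p : E) : HarmonicAt (fun y : E => ⟪a, y - p⟫) x := by
  refine ⟨(contDiff_inner_sub a p).contDiffAt, .of_forall fun y => ?_⟩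
  rw [laplacian_eq_sum_iteratedDeriv_two (stdOrthonormalBasis ℝ E)
    (contDiff_inner_sub a p).contDiffAt]
  refine Finset.sum_eq_zero fun i _ => ?_
  simp only [add_sub_right_comm, inner_add_right, inner_smul_right]
  simp [iteratedDeriv_succ]

lemma laplacian_norm_sub_sq (p : E) : Δ (fun y : E => ‖y - p‖ ^ 2) x = 2 * finrank ℝ E := by
  let b := stdOrthonormalBasis ℝ E
  have hsummand (i) : iteratedDeriv 2 (fun t : ℝ => ‖x + t • b i - p‖ ^ 2) 0 = 2 := by
    simp only [add_sub_right_comm, norm_add_sq_real, norm_smul, b.norm_eq_one, mul_one,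
      inner_smul_right, Real.norm_eq_abs, sq_abs]
    have hderiv : deriv (fun t : ℝ => ‖x - p‖ ^ 2 + 2 * (t * ⟪x - p, b i⟫) + t ^ 2) =
        fun t => 2 * ⟪x - p, b i⟫ + 2 * t := by
      funext t
      rw [deriv_fun_add (by fun_prop) (by fun_prop)]
      simp
    rw [iteratedDeriv_succ, iteratedDeriv_one, hderiv]
    simp
  simp [laplacian_eq_sum_iteratedDeriv_two b (contDiff_norm_sub_sq p).contDiffAt, hsummand,
    mul_comm]

end LaplacianCalculus

section Kernels

lemma norm_rpow_eq_comp_norm_sq {E : Type*} [SeminormedAddGroup E] (β : ℝ) :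
    (fun y : E => ‖y‖ ^ β) = (fun t : ℝ => t ^ (β / 2)) ∘ fun y : E => ‖y‖ ^ 2 := by
  funext y
  simp [← Real.rpow_natCast_mul (norm_nonneg y), mul_div_cancel₀]

variable {E : Type*} [NormedAddCommGroup E] [InnerProductSpace ℝ E] {x : E}

lemma contDiffAt_norm_rpow (hx : x ≠ 0) (β : ℝ) {k : WithTop ℕ∞} :
    ContDiffAt ℝ k (fun y : E => ‖y‖ ^ β) x :=
  (contDiffAt_norm ℝ hx).rpow_const_of_ne (norm_ne_zero_iff.2 hx)

lemma gradient_norm_rpow [CompleteSpace E] (hx : x ≠ 0) (β : ℝ) :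
    ∇ (fun y : E => ‖y‖ ^ β) x = (β * ‖x‖ ^ (β - 2)) • x := by
  have hx₂ : ‖x‖ ^ 2 ≠ 0 := by positivity
  rw [norm_rpow_eq_comp_norm_sq,
    gradient_comp (f := fun y : E => ‖y‖ ^ 2) (Real.differentiableAt_rpow_const_of_ne _ hx₂)
      ((contDiff_norm_sq ℝ).differentiable one_ne_zero x),
    Real.deriv_rpow_const, gradient_norm_sq, smul_smul,
    ← Real.rpow_natCast_mul (norm_nonneg x)]
  ring_nf

variable [FiniteDimensional ℝ E]

lemma laplacian_norm_rpow (hx : x ≠ 0) (β : ℝ) :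
    Δ (fun y : E => ‖y‖ ^ β) x = β * (β + finrank ℝ E - 2) * ‖x‖ ^ (β - 2) := by
  have hx₂ : ‖x‖ ^ 2 ≠ 0 := by positivity
  have hΔ := laplacian_norm_sub_sq (x := x) 0
  simp only [sub_zero] at hΔ
  have hd1 : (‖x‖ ^ 2) ^ (β / 2 - 1) = ‖x‖ ^ (β - 2) := by
    rw [← Real.rpow_natCast_mul (norm_nonneg x)]
    ring_nf
  have hd2 : (‖x‖ ^ 2) ^ (β / 2 - 2) * ‖x‖ ^ 2 = ‖x‖ ^ (β - 2) := by
    rw [← hd1, ← Real.rpow_add_one hx₂]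
    ring_nf
  have hiter : iteratedDeriv 2 (fun t : ℝ => t ^ (β / 2)) (‖x‖ ^ 2) =
      β / 2 * (β / 2 - 1) * (‖x‖ ^ 2) ^ (β / 2 - 2) := by
    rw [iteratedDeriv_eq_iterate, Real.iter_deriv_rpow_const]
    simp [descPochhammer_succ_right]
  rw [norm_rpow_eq_comp_norm_sq, laplacian_comp (f := fun y : E => ‖y‖ ^ 2)
    (Real.contDiffAt_rpow_const_of_ne hx₂) (contDiff_norm_sq ℝ).contDiffAt, hiter,
    Real.deriv_rpow_const, gradient_norm_sq, hΔ, hd1, norm_smul, Real.norm_two, mul_pow]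
  linear_combination β * (β - 2) * hd2

lemma harmonicAt_inv_norm_pow (hd : 2 ≤ finrank ℝ E) (hx : x ≠ 0) :
    HarmonicAt (fun y : E => (‖y‖ ^ (finrank ℝ E - 2))⁻¹) x := by
  have hrpow : (fun y : E => (‖y‖ ^ (finrank ℝ E - 2))⁻¹) =
      fun y : E => ‖y‖ ^ (2 - finrank ℝ E : ℝ) := by
    funext y
    rw [← Real.rpow_natCast, ← Real.rpow_neg (norm_nonneg y), Nat.cast_sub hd, neg_sub,
      Nat.cast_ofNat]
  rw [hrpow]
  refine ⟨contDiffAt_norm_rpow hx _, ?_⟩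
  filter_upwards [isOpen_ne.mem_nhds hx] with y hy
  simp [laplacian_norm_rpow hy]

lemma harmonicAt_inner_div_norm_pow (a : E) (hx : x ≠ 0) :
    HarmonicAt (fun y : E => ⟪a, y⟫ / ‖y‖ ^ finrank ℝ E) x := by
  have hrpow : (fun y : E => ⟪a, y⟫ / ‖y‖ ^ finrank ℝ E) =
      fun y : E => ⟪a, y - 0⟫ * ‖y‖ ^ (-finrank ℝ E : ℝ) := by
    funext y
    rw [sub_zero, Real.rpow_neg (norm_nonneg y), Real.rpow_natCast, div_eq_mul_inv]
  rw [hrpow]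
  refine ⟨(contDiff_inner_sub a 0).contDiffAt.mul (contDiffAt_norm_rpow hx _), ?_⟩
  filter_upwards [isOpen_ne.mem_nhds hx] with y hy
  rw [laplacian_mul (contDiff_inner_sub a 0).contDiffAt (contDiffAt_norm_rpow hy _),
    laplacian_norm_rpow hy, gradient_inner_sub, gradient_norm_rpow hy, inner_smul_right,
    (harmonicAt_inner_sub a 0).2.eq_of_nhds, sub_zero, Pi.zero_apply]
  ring

lemma harmonicAt_norm_sub_sq_sub_inner_sub_mul_self {a : E} (ha : ‖a‖ = 1) (p : E) :
    HarmonicAt (fun y => ‖y - p‖ ^ 2 - finrank ℝ E * (⟪a, y - p⟫ * ⟪a, y - p⟫)) x := by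
  have hℓ (y : E) : ContDiffAt ℝ 2 (fun y : E => ⟪a, y - p⟫ * ⟪a, y - p⟫) y :=
    ((contDiff_inner_sub a p).mul (contDiff_inner_sub a p)).contDiffAt
  have hN (y : E) : ContDiffAt ℝ 2 (fun y : E => ‖y - p‖ ^ 2) y :=
    (contDiff_norm_sub_sq p).contDiffAt
  refine ⟨(hN x).sub ((hℓ x).const_smul (finrank ℝ E : ℝ)), .of_forall fun y => ?_⟩
  have hΔℓ : Δ (fun y : E => ⟪a, y - p⟫ * ⟪a, y - p⟫) y = 2 := by
    rw [laplacian_mul (contDiff_inner_sub a p).contDiffAt (contDiff_inner_sub a p).contDiffAt,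
      gradient_inner_sub, (harmonicAt_inner_sub a p).2.eq_of_nhds, real_inner_self_eq_norm_sq, ha]
    simp
  calc Δ (fun y => ‖y - p‖ ^ 2 - finrank ℝ E * (⟪a, y - p⟫ * ⟪a, y - p⟫)) y
      = Δ (fun y : E => ‖y - p‖ ^ 2) y -
          (finrank ℝ E : ℝ) • Δ (fun y : E => ⟪a, y - p⟫ * ⟪a, y - p⟫) y := by
        rw [← laplacian_smul _ (hℓ y)]
        exact (hN y).laplacian_sub ((hℓ y).const_smul (finrank ℝ E : ℝ))
    _ = 0 := by rw [hΔℓ, laplacian_norm_sub_sq, smul_eq_mul]; ring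

end Kernels

section MaximumPrinciple

variable {E : Type*} [NormedAddCommGroup E] [InnerProductSpace ℝ E] [FiniteDimensional ℝ E]
  {f : E → ℝ} {U : Set E} {M : ℝ} {x : E}

lemma deriv_deriv_nonpos_of_isLocalMax {g : ℝ → ℝ} {t : ℝ} (hg : ContinuousAt g t)
    (hmax : IsLocalMax g t) : deriv (deriv g) t ≤ 0 := by
  by_contra! hpos
  have hmin : IsLocalMin g t := isLocalMin_of_deriv_deriv_pos hpos hmax.deriv_eq_zero hg
  have hconst : g =ᶠ[𝓝 t] fun _ => g t := by
    filter_upwards [hmin, hmax] with s h₁ h₂ using le_antisymm h₂ h₁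
  simp [hconst.deriv.deriv_eq] at hpos

lemma laplacian_nonpos_of_isLocalMax (hf : ContDiffAt ℝ 2 f x) (hmax : IsLocalMax f x) :
    Δ f x ≤ 0 := by
  rw [laplacian_eq_sum_iteratedDeriv_two (stdOrthonormalBasis ℝ E) hf]
  refine Finset.sum_nonpos fun i _ => ?_
  rw [iteratedDeriv_succ, iteratedDeriv_one]
  have hline : Tendsto (fun t : ℝ => x + t • stdOrthonormalBasis ℝ E i) (𝓝 0) (𝓝 x) :=
    Continuous.tendsto' (by fun_prop) _ _ (by simp)
  refine deriv_deriv_nonpos_of_isLocalMax ?_ ?_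
  · exact ContinuousAt.comp' (by simpa using hf.continuousAt) (by fun_prop)
  · filter_upwards [hline.eventually hmax] with t ht
    simpa using ht

/- Adding `η * ‖y‖ ^ 2` makes `f` strictly subharmonic, so the maximum is on the frontier. -/
lemma le_of_forall_frontier_le_of_isBounded [Nontrivial E] (hU : IsBounded U)
    (hcont : ContinuousOn f (closure U)) (hf : ∀ y ∈ interior U, ContDiffAt ℝ 2 f y)
    (hΔ : ∀ y ∈ interior U, 0 ≤ Δ f y) (hM : ∀ y ∈ frontier U, f y ≤ M)
    (hx : x ∈ closure U) : f x ≤ M := by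
  by_contra! hlt
  obtain ⟨B, hB⟩ := hU.closure.exists_norm_le
  obtain ⟨η, hη, hηB⟩ : ∃ η > 0, η * B ^ 2 < f x - M :=
    exists_pos_mul_lt (sub_pos.2 hlt) (B ^ 2) |>.imp fun η h => ⟨h.1, by linarith [h.2]⟩
  let g : E → ℝ := fun y => f y + η * ‖y‖ ^ 2
  have hgcont : ContinuousOn g (closure U) := by fun_prop
  obtain ⟨y, hy, hmax⟩ := hU.isCompact_closure.exists_isMaxOn ⟨x, hx⟩ hgcont
  have hxy : f x ≤ g y := (le_add_of_nonneg_right (by positivity)).trans (hmax hx)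
  rcases closure_eq_interior_union_frontier U ▸ hy with hint | hfront
  · have hsq : ContDiffAt ℝ 2 (fun z : E => ‖z‖ ^ 2) y := (contDiff_norm_sq ℝ).contDiffAt
    have hΔsq := laplacian_norm_sub_sq (x := y) 0
    simp only [sub_zero] at hΔsq
    have hΔg : Δ g y = Δ f y + η * (2 * finrank ℝ E) := by
      rw [← hΔsq, ← smul_eq_mul η, ← laplacian_smul η hsq]
      exact (hf y hint).laplacian_add (hsq.const_smul η)
    have hgmax : IsLocalMax g y := hmax.isLocalMax
      (mem_of_superset (isOpen_interior.mem_nhds hint) (interior_subset.trans subset_closure))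
    have hle : Δ g y ≤ 0 :=
      laplacian_nonpos_of_isLocalMax ((hf y hint).add (hsq.const_smul η)) hgmax
    have hd : (0 : ℝ) < finrank ℝ E := by exact_mod_cast finrank_pos
    have : 0 < η * (2 * finrank ℝ E) := by positivity
    linarith [hΔ y hint]
  · have hyB : η * ‖y‖ ^ 2 ≤ η * B ^ 2 := by gcongr; exact hB y hy
    linarith [hM y hfront, show g y = f y + η * ‖y‖ ^ 2 from rfl]

lemma le_of_forall_frontier_le_of_eventually_le [Nontrivial E] (hcont : ContinuousOn f (closure U))
    (hf : ∀ y ∈ interior U, ContDiffAt ℝ 2 f y) (hΔ : ∀ y ∈ interior U, 0 ≤ Δ f y)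
    (hM : ∀ y ∈ frontier U, f y ≤ M)
    (hinfty : ∀ c > M, ∀ᶠ y in cobounded E ⊓ 𝓟 U, f y ≤ c) (hx : x ∈ closure U) : f x ≤ M := by
  refine le_of_forall_gt_imp_ge_of_dense fun c hc => ?_
  obtain ⟨ρ, -, hρ⟩ := (hasBasis_cobounded_norm.inf_principal U).eventually_iff.1 (hinfty c hc)
  obtain ⟨r, hr⟩ := exists_gt (max ρ ‖x‖)
  obtain ⟨hρr, hxr⟩ := max_lt_iff.1 hr
  have hsub : U ∩ ball 0 r ⊆ U := Set.inter_subset_left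
  refine le_of_forall_frontier_le_of_isBounded (isBounded_ball.subset Set.inter_subset_right)
    (hcont.mono (closure_mono hsub)) (fun y hy => hf y (interior_mono hsub hy))
    (fun y hy => hΔ y (interior_mono hsub hy)) (fun y hy => ?_)
    (isOpen_ball.closure_inter ⟨hx, by simpa using hxr⟩)
  rcases frontier_inter_subset _ _ hy with ⟨hyU, -⟩ | ⟨hyU, hyr⟩
  · exact (hM y hyU).trans hc.le
  · rcases closure_eq_self_union_frontier U ▸ hyU with hyU | hyU
    · have := frontier_ball_subset_sphere hyr
      exact hρ ⟨by simp_all [le_of_lt], hyU⟩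
    · exact (hM y hyU).trans hc.le

lemma harmonicContOnCl_le_of_forall_frontier_le [Nontrivial E] (hf : HarmonicContOnCl f U)
    (hM : ∀ y ∈ frontier U, f y ≤ M)
    (hinfty : ∀ c > M, ∀ᶠ y in cobounded E ⊓ 𝓟 U, f y ≤ c) (hx : x ∈ closure U) : f x ≤ M :=
  le_of_forall_frontier_le_of_eventually_le hf.continuousOn
    (fun _ hy => hf.contDiffAt (interior_subset hy))
    (fun y hy => (hf.harmonicOnNhd y (interior_subset hy)).2.eq_of_nhds.ge) hM hinfty hx

end MaximumPrinciple

lemma closure_compl_closedBall_zero {E : Type*} [SeminormedAddCommGroup E] [NormedSpace ℝ E]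
    {r : ℝ} (hr : r ≠ 0) : closure (closedBall (0 : E) r)ᶜ = {y | r ≤ ‖y‖} := by
  ext y
  simp [closure_compl, interior_closedBall _ hr]

section HalfSpace

variable {E : Type*} [NormedAddCommGroup E] [InnerProductSpace ℝ E] {a p : E}

lemma frontier_inter_halfSpace_subset (s : Set E) (a p : E) :
    frontier (s ∩ {y | 0 < ⟪a, y - p⟫}) ⊆
      {y | y ∈ frontier s ∧ 0 ≤ ⟪a, y - p⟫} ∪ {y | y ∈ closure s ∧ ⟪a, y - p⟫ = 0} := by
  have hcont : Continuous fun y : E => ⟪a, y - p⟫ := by fun_prop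
  refine (frontier_inter_subset _ _).trans (Set.union_subset_union ?_ ?_)
  · exact fun y hy => ⟨hy.1, closure_lt_subset_le continuous_const hcont hy.2⟩
  · exact fun y hy => ⟨hy.1, (frontier_lt_subset_eq continuous_const hcont hy.2).symm⟩

/-- A barrier for the maximum principle on the half-ball
`ball p ρ ∩ {y | 0 < ⟪a, y - p⟫}`, where `a` is a unit vector: it is harmonic, nonnegative, at
least `ρ ^ 2` on the spherical part of the boundary, and of linear growth along the inner normal
at `p`. -/
noncomputable def halfBallBarrier (a p : E) (ρ : ℝ) (y : E) : ℝ :=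
  ‖y - p‖ ^ 2 + finrank ℝ E * (⟪a, y - p⟫ * (ρ - ⟪a, y - p⟫))

lemma sq_le_halfBallBarrier (ha : ‖a‖ = 1) {ρ : ℝ} {y : E} (hy : y ∈ sphere p ρ)
    (hay : 0 ≤ ⟪a, y - p⟫) : ρ ^ 2 ≤ halfBallBarrier a p ρ y := by
  have hnorm : ‖y - p‖ = ρ := mem_sphere_iff_norm.1 hy
  have hle : ⟪a, y - p⟫ ≤ ρ := by simpa [ha, hnorm] using real_inner_le_norm a (y - p)
  rw [halfBallBarrier, hnorm]
  exact le_add_of_nonneg_right (by have := sub_nonneg.2 hle; positivity)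

lemma halfBallBarrier_nonneg_of_inner_eq_zero {y : E} (hay : ⟪a, y - p⟫ = 0) (ρ : ℝ) :
    0 ≤ halfBallBarrier a p ρ y := by
  rw [halfBallBarrier, hay, zero_mul, mul_zero, add_zero]
  positivity

variable [FiniteDimensional ℝ E] {f : E → ℝ}

lemma harmonicAt_halfBallBarrier (ha : ‖a‖ = 1) (ρ : ℝ) {x : E} :
    HarmonicAt (halfBallBarrier a p ρ) x := by
  have hsum : halfBallBarrier a p ρ =
      (fun y => ‖y - p‖ ^ 2 - finrank ℝ E * (⟪a, y - p⟫ * ⟪a, y - p⟫)) +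
        (finrank ℝ E * ρ) • fun y => ⟪a, y - p⟫ := by
    funext y
    simp only [halfBallBarrier, Pi.add_apply, Pi.smul_apply, smul_eq_mul]
    ring
  rw [hsum]
  exact (harmonicAt_norm_sub_sq_sub_inner_sub_mul_self ha p).add
    (harmonicAt_inner_sub a p).const_smul

variable [Nontrivial E]

lemma halfBallBarrier_add_smul_le (ha : ‖a‖ = 1) (p : E) (ρ t : ℝ) :
    halfBallBarrier a p ρ (p + t • a) ≤ finrank ℝ E * ρ * t := by
  have hd : (1 : ℝ) ≤ finrank ℝ E := by exact_mod_cast Module.finrank_pos (R := ℝ) (M := E)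
  simp only [halfBallBarrier, add_sub_cancel_left, norm_smul, ha, inner_smul_right,
    real_inner_self_eq_norm_sq, Real.norm_eq_abs, mul_one, one_pow, sq_abs]
  nlinarith [mul_nonneg (sub_nonneg.2 hd) (sq_nonneg t)]

lemma harmonicContOnCl_halfBall_le (ha : ‖a‖ = 1) {ρ M : ℝ} (hM : 0 ≤ M)
    (hf : HarmonicContOnCl f (ball p ρ ∩ {y | 0 < ⟪a, y - p⟫}))
    (hfM : ∀ y ∈ sphere p ρ, f y ≤ M) (hf₀ : ∀ y ∈ closedBall p ρ, ⟪a, y - p⟫ = 0 → f y ≤ 0)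
    {t : ℝ} (ht : 0 < t) (htρ : t < ρ) : f (p + t • a) ≤ finrank ℝ E * M / ρ * t := by
  have hρ : 0 < ρ := ht.trans htρ
  have hbarrier : HarmonicContOnCl ((M / ρ ^ 2) • halfBallBarrier a p ρ)
      (ball p ρ ∩ {y | 0 < ⟪a, y - p⟫}) :=
    HarmonicOnNhd.harmonicContOnCl fun _ _ => (harmonicAt_halfBallBarrier ha ρ).const_smul
  have hmem : p + t • a ∈ ball p ρ ∩ {y | 0 < ⟪a, y - p⟫} := by
    simp [norm_smul, ha, abs_of_pos ht, ht, htρ, inner_smul_right]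
  have hbounded : IsBounded (ball p ρ ∩ {y | 0 < ⟪a, y - p⟫}) :=
    isBounded_ball.subset Set.inter_subset_left
  have hle : (f - (M / ρ ^ 2) • halfBallBarrier a p ρ) (p + t • a) ≤ 0 := by
    refine harmonicContOnCl_le_of_forall_frontier_le (hf.sub hbarrier) (fun y hy => ?_)
      (fun c _ => by simp [inf_principal_eq_bot.2 (isBounded_def.1 hbounded)])
      (subset_closure hmem)
    refine sub_nonpos.2 ?_
    rcases frontier_inter_halfSpace_subset _ a p hy with ⟨hy, hay⟩ | ⟨hy, hay⟩
    · have hyρ : y ∈ sphere p ρ := frontier_ball_subset_sphere hy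
      calc f y ≤ M / ρ ^ 2 * ρ ^ 2 := by rw [div_mul_cancel₀ _ (by positivity)]; exact hfM y hyρ
        _ ≤ M / ρ ^ 2 * halfBallBarrier a p ρ y := by
          gcongr
          exact sq_le_halfBallBarrier ha hyρ hay
    · exact (hf₀ y (closure_ball_subset_closedBall hy) hay).trans
        (mul_nonneg (by positivity) (halfBallBarrier_nonneg_of_inner_eq_zero hay ρ))
  calc f (p + t • a) ≤ M / ρ ^ 2 * halfBallBarrier a p ρ (p + t • a) := sub_nonpos.1 hle
    _ ≤ M / ρ ^ 2 * (finrank ℝ E * ρ * t) := by gcongr; exact halfBallBarrier_add_smul_le ha p ρ t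
    _ = finrank ℝ E * M / ρ * t := by field_simp

lemma harmonicContOnCl_halfExterior_le {r K : ℝ} (hr : 0 < r)
    (hf : HarmonicContOnCl f ((closedBall 0 r)ᶜ ∩ {y | 0 < ⟪a, y⟫}))
    (hinfty : Tendsto f (cobounded E) (𝓝 0)) (hK : 0 ≤ K)
    (hfK : ∀ y, ‖y‖ = r → 0 ≤ ⟪a, y⟫ → f y ≤ K * ⟪a, y⟫)
    (hf₀ : ∀ y, r ≤ ‖y‖ → ⟪a, y⟫ = 0 → f y ≤ 0) {x : E} (hx : r ≤ ‖x‖) (hax : 0 ≤ ⟪a, x⟫) :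
    f x ≤ K * ⟪a, x⟫ * (r / ‖x‖) ^ finrank ℝ E := by
  rcases hax.eq_or_lt with hax | hax
  · simpa [← hax] using hf₀ x hx hax.symm
  rcases hx.eq_or_lt with hx | hx
  · simpa [← hx, hr.ne'] using hfK x hx.symm hax.le
  let U : Set E := (closedBall 0 r)ᶜ ∩ {y | 0 < ⟪a, y⟫}
  let dipole : E → ℝ := (K * r ^ finrank ℝ E) • fun y => ⟪a, y⟫ / ‖y‖ ^ finrank ℝ E
  have hdipole_apply (y) : dipole y = K * ⟪a, y⟫ * (r / ‖y‖) ^ finrank ℝ E := by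
    simp only [dipole, Pi.smul_apply, smul_eq_mul, div_pow]
    ring
  have hclosure : closure (closedBall (0 : E) r)ᶜ ⊆ {y | r ≤ ‖y‖} :=
    (closure_compl_closedBall_zero hr.ne').le
  have hdipole : HarmonicContOnCl dipole U := HarmonicOnNhd.harmonicContOnCl fun y hy =>
    (harmonicAt_inner_div_norm_pow a (norm_pos_iff.1 (hr.trans_le
      (hclosure (closure_mono Set.inter_subset_left hy))))).const_smul
  have hfrontier : ∀ y ∈ frontier U, (f - dipole) y ≤ 0 := fun y hy => by
    rw [Pi.sub_apply, hdipole_apply, sub_nonpos]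
    rcases frontier_inter_halfSpace_subset _ a 0 (by simpa using hy) with ⟨hy, hay⟩ | ⟨hy, hay⟩
    · rw [frontier_compl, frontier_closedBall _ hr.ne', mem_sphere_zero_iff_norm] at hy
      simpa [hy, hr.ne'] using hfK y hy (by simpa using hay)
    · rw [sub_zero] at hay
      simpa [hay] using hf₀ y (hclosure hy) hay
  have hle : (f - dipole) x ≤ 0 := by
    refine harmonicContOnCl_le_of_forall_frontier_le (hf.sub hdipole) hfrontier (fun c hc => ?_)
      (subset_closure ⟨by simpa using hx, hax⟩)
    filter_upwards [(hinfty.eventually (ge_mem_nhds hc)).filter_mono inf_le_left,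
      mem_inf_of_right (mem_principal_self _)] with y hyc hy
    have hay : 0 < ⟪a, y⟫ := hy.2
    exact (sub_le_self _ (hdipole_apply y ▸ by positivity)).trans hyc
  rw [← hdipole_apply]
  exact sub_nonpos.1 hle

end HalfSpace

section Exterior

variable {E : Type*} [NormedAddCommGroup E] [InnerProductSpace ℝ E] [FiniteDimensional ℝ E]
  {f : E → ℝ} {r ε : ℝ} {a x y : E}

lemma harmonicContOnCl_exterior_le [Nontrivial E] (hf : HarmonicContOnCl f (closedBall 0 r)ᶜ)
    (hinfty : Tendsto f (cobounded E) (𝓝 0)) {M : ℝ} (hM₀ : 0 ≤ M)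
    (hM : ∀ y, ‖y‖ = r → f y ≤ M) (hx : r ≤ ‖x‖) : f x ≤ M := by
  rcases hx.eq_or_lt with hx | hx
  · exact hM x hx.symm
  refine harmonicContOnCl_le_of_forall_frontier_le hf (fun y hy => ?_) (fun c hc => ?_)
    (subset_closure (by simpa using hx))
  · rw [frontier_compl] at hy
    exact hM y (by simpa using frontier_closedBall_subset_sphere hy)
  · exact (hinfty.eventually (ge_mem_nhds (hM₀.trans_lt hc))).filter_mono inf_le_left

lemma tendsto_cobounded_zero_of_norm_pow_mul {E : Type*} [SeminormedAddGroup E] {f : E → ℝ} {k : ℕ}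
    (hf : Tendsto (fun y => ‖y‖ ^ k * f y) (cobounded E) (𝓝 0)) :
    Tendsto f (cobounded E) (𝓝 0) := by
  refine squeeze_zero_norm' ?_ (tendsto_zero_iff_norm_tendsto_zero.1 hf)
  filter_upwards [eventually_cobounded_le_norm 1] with y hy
  rw [norm_mul, norm_pow, Real.norm_of_nonneg (norm_nonneg y)]
  exact le_mul_of_one_le_left (norm_nonneg _) (one_le_pow₀ hy)

lemma tendsto_cobounded_inv_norm_pow {E : Type*} [SeminormedAddGroup E] {k : ℕ} (hk : k ≠ 0) :
    Tendsto (fun y : E => (‖y‖ ^ k)⁻¹) (cobounded E) (𝓝 0) :=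
  ((tendsto_pow_atTop hk).comp tendsto_norm_cobounded_atTop).inv_tendsto_atTop

lemma exists_norm_eq_and_nonpos_of_tendsto (hd : 3 ≤ finrank ℝ E) (hr : 0 < r)
    (hf : HarmonicContOnCl f (closedBall 0 r)ᶜ)
    (hinfty : Tendsto (fun y => ‖y‖ ^ (finrank ℝ E - 2) * f y) (cobounded E) (𝓝 0)) :
    ∃ y, ‖y‖ = r ∧ f y ≤ 0 := by
  have : Nontrivial E := nontrivial_of_finrank_pos (by lia : 0 < finrank ℝ E)
  have hk : finrank ℝ E - 2 ≠ 0 := by lia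
  set k := finrank ℝ E - 2
  have hclosure := closure_compl_closedBall_zero (E := E) hr.ne'
  by_contra! hpos
  obtain ⟨z, hz, hmin⟩ := (isCompact_sphere (0 : E) r).exists_isMinOn
    (NormedSpace.sphere_nonempty.2 hr.le)
    (hf.continuousOn.mono fun y hy => hclosure.ge (mem_sphere_zero_iff_norm.1 hy).ge)
  have hz₀ : 0 < f z := hpos z (mem_sphere_zero_iff_norm.1 hz)
  let barrier : E → ℝ := (f z * r ^ k) • fun y => (‖y‖ ^ k)⁻¹
  have hbarrier : HarmonicContOnCl barrier (closedBall 0 r)ᶜ :=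
    HarmonicOnNhd.harmonicContOnCl fun y hy => (harmonicAt_inv_norm_pow (by lia)
      (norm_pos_iff.1 (hr.trans_le (hclosure.le hy)))).const_smul
  have hlim : Tendsto (barrier - f) (cobounded E) (𝓝 0) := by
    simpa using! ((tendsto_cobounded_inv_norm_pow hk).const_smul (f z * r ^ k)).sub
      (tendsto_cobounded_zero_of_norm_pow_mul hinfty)
  have hsphere (y : E) (hy : ‖y‖ = r) : (barrier - f) y ≤ 0 := by
    simpa [barrier, hy, hr.ne'] using hmin (mem_sphere_zero_iff_norm.2 hy)
  have hlower : ∀ᶠ y in cobounded E, f z * r ^ k ≤ ‖y‖ ^ k * f y := by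
    filter_upwards [eventually_cobounded_le_norm r] with y hy
    have hle := harmonicContOnCl_exterior_le (hbarrier.sub hf) hlim le_rfl hsphere hy
    have hy₀ : 0 < ‖y‖ ^ k := pow_pos (hr.trans_le hy) k
    rwa [← div_le_iff₀' hy₀, div_eq_mul_inv, ← sub_nonpos]
  exact (ge_of_tendsto hinfty hlower).not_gt (by positivity)

lemma harmonicContOnCl_exterior_le_mul_inner [Nontrivial E] (hr : 0 < r)
    (hf : HarmonicContOnCl f (closedBall 0 r)ᶜ) (ha : ‖a‖ = 1) {M : ℝ} (hM : 0 ≤ M)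
    (hfM : ∀ y, r ≤ ‖y‖ → f y ≤ M) (hf₀ : ∀ y, r ≤ ‖y‖ → ⟪a, y⟫ = 0 → f y ≤ 0)
    (hx : 2 * r ≤ ‖x‖) (hax : 0 ≤ ⟪a, x⟫) : f x ≤ 2 * finrank ℝ E * M / r * ⟪a, x⟫ := by
  rcases hax.eq_or_lt with hax | hax
  · simpa [← hax] using hf₀ x (by linarith) hax.symm
  rcases le_or_gt (r / 2) ⟪a, x⟫ with hrx | hxr
  · have hd : (1 : ℝ) ≤ finrank ℝ E := by exact_mod_cast Module.finrank_pos (R := ℝ) (M := E)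
    calc f x ≤ 2 * 1 * M / r * (r / 2) := by field_simp; exact hfM x (by linarith)
      _ ≤ 2 * finrank ℝ E * M / r * ⟪a, x⟫ := by gcongr
  let p : E := x - ⟪a, x⟫ • a
  have hap : ⟪a, p⟫ = 0 := by simp [p, inner_sub_right, inner_smul_right, ha]
  have hball : ∀ y ∈ closedBall p (r / 2), r < ‖y‖ := fun y hy => by
    have hxp : ‖x - p‖ = ⟪a, x⟫ := by simp [p, norm_smul, ha, abs_of_pos hax]
    have hpy : ‖p - y‖ ≤ r / 2 := mem_closedBall_iff_norm'.1 hy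
    linarith [norm_sub_norm_le x y, norm_sub_le_norm_sub_add_norm_sub x p y]
  have hsub : ball p (r / 2) ⊆ (closedBall 0 r)ᶜ := fun y hy => by
    simpa using hball y (ball_subset_closedBall hy)
  calc f x = f (p + ⟪a, x⟫ • a) := by rw [sub_add_cancel]
    _ ≤ finrank ℝ E * M / (r / 2) * ⟪a, x⟫ :=
      harmonicContOnCl_halfBall_le ha hM (hf.mono (Set.inter_subset_left.trans hsub))
        (fun y hy => hfM y (hball y (sphere_subset_closedBall hy)).le)
        (fun y hy hay => hf₀ y (hball y hy).le (by simpa [inner_sub_right, hap] using hay)) hax hxr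
    _ = 2 * finrank ℝ E * M / r * ⟪a, x⟫ := by field_simp

lemma harmonicContOnCl_exterior_le_dipole [Nontrivial E] (hr : 0 < r)
    (hf : HarmonicContOnCl f (closedBall 0 r)ᶜ) (hinfty : Tendsto f (cobounded E) (𝓝 0))
    (ha : ‖a‖ = 1) {M : ℝ} (hM : 0 ≤ M) (hfM : ∀ y, ‖y‖ = r → f y ≤ M)
    (hf₀ : ∀ y, r ≤ ‖y‖ → ⟪a, y⟫ = 0 → f y ≤ 0) (hx : 2 * r ≤ ‖x‖) (hax : 0 ≤ ⟪a, x⟫) :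
    f x ≤ 2 * finrank ℝ E * M / r * ⟪a, x⟫ * (2 * r / ‖x‖) ^ finrank ℝ E := by
  have hr₂ : r ≤ 2 * r := by linarith
  have hsub : (closedBall 0 (2 * r))ᶜ ∩ {y | 0 < ⟪a, y⟫} ⊆ (closedBall 0 r)ᶜ :=
    Set.inter_subset_left.trans (Set.compl_subset_compl.2 (closedBall_subset_closedBall hr₂))
  refine harmonicContOnCl_halfExterior_le (by positivity) (hf.mono hsub) hinfty (by positivity)
    (fun y hy hay => ?_) (fun y hy => hf₀ y (hr₂.trans hy)) hx hax
  exact harmonicContOnCl_exterior_le_mul_inner hr hf ha hM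
    (fun z hz => harmonicContOnCl_exterior_le hf hinfty hM hfM hz) hf₀ hy.ge hay

lemma harmonicContOnCl_exterior_comp_linearIsometryEquiv (σ : E ≃ₗᵢ[ℝ] E)
    (hf : HarmonicContOnCl f (closedBall 0 r)ᶜ) :
    HarmonicContOnCl (f ∘ σ) (closedBall 0 r)ᶜ := by
  have hmaps : Set.MapsTo σ (closedBall 0 r)ᶜ (closedBall 0 r)ᶜ := fun y hy => by simpa using hy
  exact ⟨fun y hy => harmonicAt_comp_linearIsometryEquiv σ (hf.harmonicOnNhd _ (hmaps hy)),
    hf.continuousOn.comp σ.continuous.continuousOn (hmaps.closure σ.continuous)⟩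

lemma harmonicContOnCl_exterior_sub_le [Nontrivial E] (hr : 0 < r)
    (hf : HarmonicContOnCl f (closedBall 0 r)ᶜ) (hinfty : Tendsto f (cobounded E) (𝓝 0))
    (hε : 0 ≤ ε) (hfε : ∀ y, ‖y‖ = r → |f y| ≤ ε) (hxy : ‖x‖ = ‖y‖) (hx : 2 * r ≤ ‖x‖) :
    f x - f y ≤ 4 * finrank ℝ E * 2 ^ finrank ℝ E * ε * (r / ‖x‖) ^ (finrank ℝ E - 1) := by
  rcases eq_or_ne x y with rfl | hne
  · rw [sub_self]
    positivity
  let a : E := ‖x - y‖⁻¹ • (x - y)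
  let σ : E ≃ₗᵢ[ℝ] E := (ℝ ∙ (x - y))ᗮ.reflection
  have hx₀ : 0 < ‖x‖ := by linarith
  have ha : ‖a‖ = 1 := norm_smul_inv_norm (sub_ne_zero.2 hne)
  have hax : 0 ≤ ⟪a, x⟫ := by
    have hyx : ⟪y, x⟫ ≤ ‖x‖ ^ 2 := (real_inner_le_norm y x).trans_eq (by rw [hxy, sq])
    rw [real_inner_smul_left, inner_sub_left, real_inner_self_eq_norm_sq]
    exact mul_nonneg (by positivity) (sub_nonneg.2 hyx)
  have haxle : ⟪a, x⟫ ≤ ‖x‖ := by simpa [ha] using real_inner_le_norm a x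
  have hσ₀ (z : E) (hz : ⟪a, z⟫ = 0) : σ z = z := by
    refine Submodule.reflection_mem_subspace_eq_self
      (Submodule.mem_orthogonal_singleton_iff_inner_right.2 ?_)
    simpa [a, real_inner_smul_left, sub_ne_zero.2 hne] using hz
  have hodd : f x - (f ∘ σ) x ≤
      2 * finrank ℝ E * (2 * ε) / r * ⟪a, x⟫ * (2 * r / ‖x‖) ^ finrank ℝ E := by
    refine harmonicContOnCl_exterior_le_dipole (f := f - f ∘ σ) hr
      (hf.sub (harmonicContOnCl_exterior_comp_linearIsometryEquiv σ hf)) ?_ ha (by positivity)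
      (fun z hz => ?_) (fun z _ hz => ?_) hx hax
    · simpa using! hinfty.sub (hinfty.comp σ.antilipschitz.tendsto_cobounded)
    · have h₁ := abs_le.1 (hfε z hz)
      have h₂ := abs_le.1 (hfε (σ z) (by rw [σ.norm_map, hz]))
      simp only [Pi.sub_apply, Function.comp_apply]
      linarith
    · simp [hσ₀ z hz]
  calc f x - f y = f x - (f ∘ σ) x := by rw [Function.comp_apply, Submodule.reflection_sub hxy]
    _ ≤ 2 * finrank ℝ E * (2 * ε) / r * ‖x‖ * (2 * r / ‖x‖) ^ finrank ℝ E :=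
      hodd.trans (by gcongr)
    _ = 4 * finrank ℝ E * 2 ^ finrank ℝ E * ε * (r / ‖x‖) ^ (finrank ℝ E - 1) := by
      obtain ⟨d, hd⟩ := Nat.exists_eq_add_one.2 (Module.finrank_pos (R := ℝ) (M := E))
      rw [hd, Nat.add_sub_cancel, mul_div_assoc 2 r, mul_pow, pow_succ (r / ‖x‖)]
      field_simp
      ring

lemma harmonicContOnCl_exterior_le_mul_pow (hd : 3 ≤ finrank ℝ E) (hr : 0 < r)
    (hf : HarmonicContOnCl f (closedBall 0 r)ᶜ)
    (hinfty : Tendsto (fun y => ‖y‖ ^ (finrank ℝ E - 2) * f y) (cobounded E) (𝓝 0))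
    (hfε : ∀ y, ‖y‖ = r → |f y| ≤ ε) (hx : 2 * r ≤ ‖x‖) :
    f x ≤ 4 * finrank ℝ E * 2 ^ finrank ℝ E * ε * (r / ‖x‖) ^ (finrank ℝ E - 1) := by
  have : Nontrivial E := nontrivial_of_finrank_pos (by lia : 0 < finrank ℝ E)
  obtain ⟨z, hz⟩ := NormedSpace.sphere_nonempty (x := (0 : E)).2 hr.le
  have hε : 0 ≤ ε := (abs_nonneg _).trans (hfε z (mem_sphere_zero_iff_norm.1 hz))
  have hsub : (closedBall 0 ‖x‖)ᶜ ⊆ (closedBall (0 : E) r)ᶜ :=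
    Set.compl_subset_compl.2 (closedBall_subset_closedBall (by linarith))
  obtain ⟨y, hyx, hy⟩ :=
    exists_norm_eq_and_nonpos_of_tendsto hd (by linarith) (hf.mono hsub) hinfty
  have hosc := harmonicContOnCl_exterior_sub_le hr hf
    (tendsto_cobounded_zero_of_norm_pow_mul hinfty) hε hfε hyx.symm hx
  linarith

theorem exterior_harmonic_decay_general (hd : 3 ≤ finrank ℝ E) (hr : 0 < r)
    (hf : HarmonicContOnCl f (closedBall 0 r)ᶜ)
    (hinfty : Tendsto (fun y => ‖y‖ ^ (finrank ℝ E - 2) * f y) (cobounded E) (𝓝 0))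
    (hfε : ∀ y, ‖y‖ = r → |f y| ≤ ε) (hx : 2 * r ≤ ‖x‖) :
    |f x| ≤ 4 * finrank ℝ E * 2 ^ finrank ℝ E * ε * (r / ‖x‖) ^ (finrank ℝ E - 1) := by
  have hneg : HarmonicContOnCl (-f) (closedBall 0 r)ᶜ := hf.neg
  have hinfty_neg :
      Tendsto (fun y => ‖y‖ ^ (finrank ℝ E - 2) * (-f) y) (cobounded E) (𝓝 0) := by
    simpa only [Pi.neg_apply, mul_neg, neg_zero] using hinfty.neg
  have hle := harmonicContOnCl_exterior_le_mul_pow hd hr hf hinfty hfε hx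
  have hneg_le := harmonicContOnCl_exterior_le_mul_pow hd hr hneg hinfty_neg
    (by simpa only [Pi.neg_apply, abs_neg] using hfε) hx
  rw [Pi.neg_apply] at hneg_le
  exact abs_le'.2 ⟨hle, hneg_le⟩

end Exterior

section HarmonicOnSet

variable {n : ℕ} {f : EuclideanSpace ℝ (Fin n) → ℝ} {Ω : Set (EuclideanSpace ℝ (Fin n))}

lemma laplacian_eq_sum_fderiv_fderiv_single {x : EuclideanSpace ℝ (Fin n)}
    (hf : ContDiffAt ℝ 2 f x) :
    Δ f x = ∑ i, fderiv ℝ (fun y => fderiv ℝ f y (EuclideanSpace.single i 1)) x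
      (EuclideanSpace.single i 1) := by
  have hf' : DifferentiableAt ℝ (fderiv ℝ f) x :=
    (hf.fderiv_right (m := 1) (by norm_num)).differentiableAt one_ne_zero
  rw [laplacian_eq_iteratedFDeriv_orthonormalBasis f (EuclideanSpace.basisFun (Fin n) ℝ)]
  refine Finset.sum_congr rfl fun i _ => ?_
  rw [iteratedFDeriv_two_apply, fderiv_clm_apply hf' (differentiableAt_const _)]
  simp

lemma harmonicOnNhd_of_harmonicOnSet (hΩ : IsOpen Ω) (hf : HarmonicOnSet f Ω) :
    HarmonicOnNhd f Ω := by
  have hf₂ : ∀ x ∈ Ω, ContDiffAt ℝ 2 f x := fun x hx =>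
    (hf.1.contDiffAt (hΩ.mem_nhds hx)).of_le (WithTop.coe_le_coe.2 le_top)
  refine fun x hx => ⟨hf₂ x hx, ?_⟩
  filter_upwards [hΩ.mem_nhds hx] with y hy
  rw [laplacian_eq_sum_fderiv_fderiv_single (hf₂ y hy), hf.2 y hy, Pi.zero_apply]

lemma harmonicContOnCl_compl_closedBall_zero {R : ℝ} (hR : 0 < R)
    (hcont : ContinuousOn f {x | R ≤ ‖x‖}) (hf : HarmonicOnSet f {x | R < ‖x‖}) :
    HarmonicContOnCl f (closedBall 0 R)ᶜ := by
  have hcompl : (closedBall (0 : EuclideanSpace ℝ (Fin n)) R)ᶜ = {x | R < ‖x‖} := by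
    ext x
    simp
  exact ⟨hcompl ▸ harmonicOnNhd_of_harmonicOnSet
    (isOpen_lt continuous_const continuous_norm) hf,
    (closure_compl_closedBall_zero (E := EuclideanSpace ℝ (Fin n)) hR.ne').symm ▸ hcont⟩

end HarmonicOnSet

/-- decay estimate for an exterior harmonic function whose expansion at
infinity has no constant and no `‖x‖^{2-n}` term: if `|W| ≤ ε` on the sphere of radius
`R`, then `|W(x)| ≤ C·ε·(R/‖x‖)^{n-1}` for `‖x‖ ≥ 2R`, with `C` depending only on `n`. -/
theorem exterior_harmonic_decay (n : ℕ) (hn : 3 ≤ n) :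
    ∃ C : ℝ, ∀ R ε : ℝ, 0 < R → 0 < ε →
      ∀ W : EuclideanSpace ℝ (Fin n) → ℝ,
        ContinuousOn W {x : EuclideanSpace ℝ (Fin n) | R ≤ ‖x‖} →
        HarmonicOnSet W {x : EuclideanSpace ℝ (Fin n) | R < ‖x‖} →
        Tendsto W (comap (fun x : EuclideanSpace ℝ (Fin n) => ‖x‖) atTop) (nhds 0) →
        Tendsto (fun x : EuclideanSpace ℝ (Fin n) => ‖x‖ ^ (n - 2) * W x)
          (comap (fun x : EuclideanSpace ℝ (Fin n) => ‖x‖) atTop) (nhds 0) →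
        (∀ x : EuclideanSpace ℝ (Fin n), ‖x‖ = R → |W x| ≤ ε) →
        ∀ x : EuclideanSpace ℝ (Fin n), 2 * R ≤ ‖x‖ →
          |W x| ≤ C * ε * (R / ‖x‖) ^ (n - 1) := by
  refine ⟨4 * n * 2 ^ n, fun R ε hR _ W hcont hharm _ hinfty hε x hx => ?_⟩
  rw [comap_norm_atTop] at hinfty
  have hdim : finrank ℝ (EuclideanSpace ℝ (Fin n)) = n := finrank_euclideanSpace_fin
  simpa only [hdim] using exterior_harmonic_decay_general (hn.trans_eq hdim.symm) hR
    (harmonicContOnCl_compl_closedBall_zero hR hcont hharm) (by rwa [hdim]) hε hx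
end
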